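/- arXiv:1811.01616 — 8 statements merged into one kernel-verified Lean document; each statement's English description precedes it below -/
import Mathlib

section
/- Let n be a positive integer, let a > 0 and α > 0, and define the enthalpy w(r) = a·(1 − r^n) for r ∈ [0,1], the mean density G(r) = r^{-3} ∫_0^r 4π w(s)^α s² ds for r ∈ (0,1], and g(r) = 3·√(G(r)/2). Then there exist constants c₁, c₂ > 0 such that c₁ r^n ≤ − r·g'(r)/g(r) ≤ c₂ r^n for all r ∈ (0,1]. -/
open Real Set

/-! With `ρ = 4π w^α`, the substitution `s = r t` turns the mean density into
`G(r) = ∫₀¹ ρ(rt) t² dt`, which is antitone because `ρ` is, and differentiating `r³ G(r)` gives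
`-r G'(r) / G(r) = 3 ∫₀¹ (ρ(rt) - ρ(r)) t² dt / G(r)`. The denominator lies between `G(1)` and
`ρ(0) / 3`. As `ρ` is a multiple of `(1 - r^n)^α`, Bernoulli's inequality shows that the
difference `ρ(rt) - ρ(r)` is at most a multiple of `r^n`, and at least a multiple of
`r^n (1 - t^n)^max(1, α)`. Passing from `G` to `g` halves the logarithmic derivative. -/

section Calculus

lemma logDeriv_sqrt {f : ℝ → ℝ} {x : ℝ} (hf : DifferentiableAt ℝ f x) (hx : 0 < f x) :
    logDeriv (fun y => √(f y)) x = logDeriv f x / 2 := by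
  rw [logDeriv_apply, logDeriv_apply, deriv_sqrt hf hx.ne', div_div, mul_assoc,
    Real.mul_self_sqrt hx.le, mul_comm 2, div_div]

lemma logDeriv_const_mul_sqrt_div {f : ℝ → ℝ} {x b c : ℝ} (hf : DifferentiableAt ℝ f x)
    (hx : 0 < f x) (hb : 0 < b) (hc : c ≠ 0) :
    logDeriv (fun y => c * √(f y / b)) x = logDeriv f x / 2 := by
  rw [logDeriv_const_mul x c hc, logDeriv_sqrt (hf.div_const b) (div_pos hx hb)]
  simp only [div_eq_mul_inv _ b, logDeriv_mul_const x b⁻¹ (inv_ne_zero hb.ne')]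

end Calculus

section MeanDensity

/-- The mean density `r^{-(d+1)} ∫_0^r ρ(s) s^d ds` of the radial density `ρ` over the ball of
radius `r` in dimension `d + 1`, up to a dimensional constant; the paper's `G` is the
case `d = 2`, `ρ = 4π w^α`. Its value at `r = 0` is the junk value `0`. -/
noncomputable def meanDensity (d : ℕ) (ρ : ℝ → ℝ) (r : ℝ) : ℝ :=
  (∫ s in (0 : ℝ)..r, ρ s * s ^ d) / r ^ (d + 1)

variable {d : ℕ} {ρ : ℝ → ℝ} {r R : ℝ}

lemma meanDensity_congr {ρ' : ℝ → ℝ} (hr : 0 ≤ r) (h : EqOn ρ ρ' (Icc 0 r)) :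
    meanDensity d ρ r = meanDensity d ρ' r := by
  refine congrArg (· / r ^ (d + 1)) (intervalIntegral.integral_congr fun s hs => ?_)
  rw [uIcc_of_le hr] at hs
  exact congrArg (· * s ^ d) (h hs)

lemma meanDensity_eq_integral_comp_mul (hr : r ≠ 0) :
    meanDensity d ρ r = ∫ t in (0 : ℝ)..1, ρ (r * t) * t ^ d := by
  have hsubst := intervalIntegral.mul_integral_comp_mul_left
    (f := fun s => ρ s * s ^ d) (a := 0) (b := 1) (c := r)
  simp only [mul_zero, mul_one, mul_pow, mul_left_comm _ (r ^ d),
    intervalIntegral.integral_const_mul] at hsubst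
  rw [meanDensity, ← hsubst]
  field_simp
  ring

lemma hasDerivAt_meanDensity (hρ : Continuous ρ) (hr : r ≠ 0) :
    HasDerivAt (meanDensity d ρ) ((ρ r - (d + 1) * meanDensity d ρ r) / r) r := by
  have hint : HasDerivAt (fun x => ∫ s in (0 : ℝ)..x, ρ s * s ^ d) (ρ r * r ^ d) r :=
    (Continuous.integral_hasStrictDerivAt (by fun_prop) 0 r).hasDerivAt
  refine (hint.div (hasDerivAt_pow (d + 1) r) (pow_ne_zero _ hr)).congr_deriv ?_
  simp only [meanDensity, Nat.add_sub_cancel]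
  push_cast
  field_simp
  ring

lemma neg_mul_logDeriv_meanDensity (hρ : Continuous ρ) (hr : r ≠ 0) :
    -(r * logDeriv (meanDensity d ρ) r) =
      ((d + 1) * meanDensity d ρ r - ρ r) / meanDensity d ρ r := by
  rw [logDeriv_apply, (hasDerivAt_meanDensity hρ hr).deriv]
  field_simp
  ring

lemma succ_mul_integral_const_mul_pow (c : ℝ) :
    (d + 1) * ∫ t in (0 : ℝ)..1, c * t ^ d = c := by
  rw [intervalIntegral.integral_const_mul, integral_pow]
  simp only [one_pow, ne_eq, Nat.add_one_ne_zero, not_false_eq_true, zero_pow, sub_zero]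
  field_simp

lemma integral_mul_pow_le_integral_mul_pow {f g : ℝ → ℝ} (hf : Continuous f) (hg : Continuous g)
    (hfg : ∀ t ∈ Icc (0 : ℝ) 1, f t ≤ g t) :
    ∫ t in (0 : ℝ)..1, f t * t ^ d ≤ ∫ t in (0 : ℝ)..1, g t * t ^ d :=
  intervalIntegral.integral_mono_on zero_le_one (Continuous.intervalIntegrable (by fun_prop) _ _)
    (Continuous.intervalIntegrable (by fun_prop) _ _)
    fun t ht => mul_le_mul_of_nonneg_right (hfg t ht) (pow_nonneg ht.1 d)

lemma succ_mul_meanDensity_sub (hρ : Continuous ρ) (hr : r ≠ 0) :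
    (d + 1) * meanDensity d ρ r - ρ r =
      (d + 1) * ∫ t in (0 : ℝ)..1, (ρ (r * t) - ρ r) * t ^ d := by
  simp only [sub_mul]
  rw [intervalIntegral.integral_sub (Continuous.intervalIntegrable (by fun_prop) _ _)
    (Continuous.intervalIntegrable (by fun_prop) _ _), mul_sub, succ_mul_integral_const_mul_pow,
    meanDensity_eq_integral_comp_mul hr]

lemma meanDensity_pos (hρ : Continuous ρ) (hr : 0 < r) (hpos : ∀ s ∈ Ioo 0 r, 0 < ρ s) :
    0 < meanDensity d ρ r :=
  div_pos (intervalIntegral.intervalIntegral_pos_of_pos_on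
    (Continuous.intervalIntegrable (by fun_prop) _ _)
    (fun s hs => mul_pos (hpos s hs) (pow_pos hs.1 d)) hr) (pow_pos hr _)

lemma succ_mul_meanDensity_le (hρ : Continuous ρ) (hanti : AntitoneOn ρ (Icc 0 r)) (hr : 0 < r) :
    (d + 1) * meanDensity d ρ r ≤ ρ 0 := by
  rw [← succ_mul_integral_const_mul_pow (d := d) (ρ 0), meanDensity_eq_integral_comp_mul hr.ne']
  refine mul_le_mul_of_nonneg_left (integral_mul_pow_le_integral_mul_pow (by fun_prop)
    continuous_const fun t ht => ?_) (by positivity)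
  have hrt : 0 ≤ r * t := mul_nonneg hr.le ht.1
  exact hanti (left_mem_Icc.2 hr.le) ⟨hrt, mul_le_of_le_one_right hr.le ht.2⟩ hrt

lemma antitoneOn_meanDensity (hρ : Continuous ρ) (hanti : AntitoneOn ρ (Icc 0 R)) :
    AntitoneOn (meanDensity d ρ) (Ioc 0 R) := by
  intro r hr r' hr' hrr'
  rw [meanDensity_eq_integral_comp_mul hr.1.ne', meanDensity_eq_integral_comp_mul hr'.1.ne']
  refine integral_mul_pow_le_integral_mul_pow (by fun_prop) (by fun_prop) fun t ht => ?_
  have hmem {x : ℝ} (hx : x ∈ Ioc 0 R) : x * t ∈ Icc 0 R :=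
    ⟨mul_nonneg hx.1.le ht.1, (mul_le_of_le_one_right hx.1.le ht.2).trans hx.2⟩
  exact hanti (hmem hr) (hmem hr') (mul_le_mul_of_nonneg_right hrr' ht.1)

lemma neg_mul_logDeriv_meanDensity_le (hρ : Continuous ρ) (hanti : AntitoneOn ρ (Icc 0 R))
    (hr : r ∈ Ioc 0 R) (hpos : 0 < meanDensity d ρ R) :
    -(r * logDeriv (meanDensity d ρ) r) ≤ (ρ 0 - ρ r) / meanDensity d ρ R := by
  have hR : 0 < R := hr.1.trans_le hr.2
  rw [neg_mul_logDeriv_meanDensity hρ hr.1.ne']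
  refine div_le_div₀ (sub_nonneg.2 ?_) (sub_le_sub_right ?_ _) hpos ?_
  · exact hanti (left_mem_Icc.2 hR.le) (Ioc_subset_Icc_self hr) hr.1.le
  · exact succ_mul_meanDensity_le hρ (hanti.mono (Icc_subset_Icc_right hr.2)) hr.1
  · exact antitoneOn_meanDensity hρ hanti hr (right_mem_Ioc.2 hR) hr.2

lemma le_neg_mul_logDeriv_meanDensity (hρ : Continuous ρ) (hanti : AntitoneOn ρ (Icc 0 r))
    (hr : 0 < r) (hpos : 0 < meanDensity d ρ r) {k : ℝ → ℝ} (hk : Continuous k)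
    (hk_nonneg : ∀ t ∈ Icc (0 : ℝ) 1, 0 ≤ k t)
    (hk_le : ∀ t ∈ Icc (0 : ℝ) 1, k t ≤ ρ (r * t) - ρ r) :
    (d + 1) ^ 2 * (∫ t in (0 : ℝ)..1, k t * t ^ d) / ρ 0 ≤
      -(r * logDeriv (meanDensity d ρ) r) := by
  have hmono : ∫ t in (0 : ℝ)..1, k t * t ^ d ≤
      ∫ t in (0 : ℝ)..1, (ρ (r * t) - ρ r) * t ^ d :=
    integral_mul_pow_le_integral_mul_pow hk (by fun_prop) hk_le
  have hnonneg : 0 ≤ ∫ t in (0 : ℝ)..1, k t * t ^ d :=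
    intervalIntegral.integral_nonneg zero_le_one
      fun t ht => mul_nonneg (hk_nonneg t ht) (pow_nonneg ht.1 d)
  have hG : (d + 1) * meanDensity d ρ r ≤ ρ 0 := succ_mul_meanDensity_le hρ hanti hr
  calc (d + 1) ^ 2 * (∫ t in (0 : ℝ)..1, k t * t ^ d) / ρ 0
      ≤ (d + 1) ^ 2 * (∫ t in (0 : ℝ)..1, (ρ (r * t) - ρ r) * t ^ d) /
          ((d + 1) * meanDensity d ρ r) := by
        refine div_le_div₀ (mul_nonneg (by positivity) (hnonneg.trans hmono)) ?_
          (by positivity) hG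
        gcongr
    _ = -(r * logDeriv (meanDensity d ρ) r) := by
      rw [neg_mul_logDeriv_meanDensity hρ hr.ne', succ_mul_meanDensity_sub hρ hr.ne']
      field_simp

end MeanDensity

section Bernoulli

variable {α x t : ℝ}

lemma one_sub_one_sub_rpow_le (hx : x ∈ Icc (0 : ℝ) 1) :
    1 - (1 - x) ^ α ≤ max 1 α * x := by
  rcases le_total α 1 with hα | hα
  · rw [max_eq_left hα, one_mul]
    linarith [self_le_rpow_of_le_one (sub_nonneg.2 hx.2) (sub_le_self 1 hx.1) hα]
  · rw [max_eq_right hα]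
    have hbernoulli := one_add_mul_self_le_rpow_one_add (neg_le_neg hx.2) hα
    rw [← sub_eq_add_neg] at hbernoulli
    linarith

lemma mul_mul_one_sub_le_rpow_sub_rpow (hα₀ : 0 ≤ α) (hα₁ : α ≤ 1) (hx : x ∈ Icc (0 : ℝ) 1)
    (ht : t ∈ Icc (0 : ℝ) 1) : α * (x * (1 - t)) ≤ (1 - x * t) ^ α - (1 - x) ^ α := by
  have hconcave : t * (1 - x) ^ α + (1 - t) * 1 ^ α ≤ (t * (1 - x) + (1 - t) * 1) ^ α :=
    (concaveOn_rpow hα₀ hα₁).2 (sub_nonneg.2 hx.2) (mem_Ici.2 zero_le_one) ht.1 (sub_nonneg.2 ht.2)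
      (add_sub_cancel t 1)
  have hbernoulli : (1 - x) ^ α ≤ 1 - α * x := by
    have := rpow_one_add_le_one_add_mul_self (neg_le_neg hx.2) hα₀ hα₁
    rwa [← sub_eq_add_neg, mul_neg, ← sub_eq_add_neg] at this
  rw [one_rpow, show t * (1 - x) + (1 - t) * 1 = 1 - x * t by ring] at hconcave
  linarith [mul_le_mul_of_nonneg_left hbernoulli (sub_nonneg.2 ht.2)]

lemma sub_mul_rpow_sub_one_le_rpow_sub_rpow {u v : ℝ} (hα : 1 ≤ α) (hv : 0 ≤ v) (hvu : v ≤ u) :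
    (u - v) * u ^ (α - 1) ≤ u ^ α - v ^ α := by
  have hsplit {y : ℝ} (hy : 0 ≤ y) : y ^ α = y * y ^ (α - 1) := by
    rw [← rpow_one_add' hy (by linarith), add_sub_cancel]
  have hpow : v ^ (α - 1) ≤ u ^ (α - 1) := rpow_le_rpow hv hvu (sub_nonneg.2 hα)
  rw [hsplit hv, hsplit (hv.trans hvu), sub_mul]
  gcongr

lemma mul_one_sub_rpow_le_rpow_sub_rpow (hα : 1 ≤ α) (hx : x ∈ Icc (0 : ℝ) 1)
    (ht : t ∈ Icc (0 : ℝ) 1) : x * (1 - t) ^ α ≤ (1 - x * t) ^ α - (1 - x) ^ α := by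
  have h1t : 0 ≤ 1 - t := sub_nonneg.2 ht.2
  calc x * (1 - t) ^ α = x * (1 - t) * (1 - t) ^ (α - 1) := by
        rw [mul_assoc, ← rpow_one_add' h1t (by linarith), add_sub_cancel]
    _ ≤ x * (1 - t) * (1 - x * t) ^ (α - 1) :=
        mul_le_mul_of_nonneg_left (rpow_le_rpow h1t
          (sub_le_sub_left (mul_le_of_le_one_left ht.1 hx.2) 1) (sub_nonneg.2 hα))
          (mul_nonneg hx.1 h1t)
    _ = ((1 - x * t) - (1 - x)) * (1 - x * t) ^ (α - 1) := by ring
    _ ≤ (1 - x * t) ^ α - (1 - x) ^ α :=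
        sub_mul_rpow_sub_one_le_rpow_sub_rpow hα (sub_nonneg.2 hx.2)
          (sub_le_sub_left (mul_le_of_le_one_right hx.1 ht.2) 1)

lemma min_mul_one_sub_rpow_max_le_rpow_sub_rpow (hα : 0 ≤ α) (hx : x ∈ Icc (0 : ℝ) 1)
    (ht : t ∈ Icc (0 : ℝ) 1) :
    min 1 α * (x * (1 - t) ^ max 1 α) ≤ (1 - x * t) ^ α - (1 - x) ^ α := by
  rcases le_total α 1 with hα₁ | hα₁
  · rw [min_eq_right hα₁, max_eq_left hα₁, rpow_one]
    exact mul_mul_one_sub_le_rpow_sub_rpow hα hα₁ hx ht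
  · rw [min_eq_left hα₁, max_eq_right hα₁, one_mul]
    exact mul_one_sub_rpow_le_rpow_sub_rpow hα₁ hx ht

end Bernoulli

section EnthalpyDensity

/-- The density `4π w^α` of the enthalpy `w(s) = a (1 - s^ν)`. Beyond `s = 1` the base of the power
is negative and `Real.rpow` takes a conventional value. -/
noncomputable def enthalpyDensity (a ν α s : ℝ) : ℝ :=
  4 * π * (a * (1 - s ^ ν)) ^ α

variable {a ν α r t : ℝ}

lemma continuous_enthalpyDensity (hν : 0 ≤ ν) (hα : 0 ≤ α) :
    Continuous (enthalpyDensity a ν α) :=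
  continuous_const.mul ((continuous_const.mul (continuous_const.sub
    (continuous_rpow_const hν))).rpow_const fun _ => Or.inr hα)

lemma rpow_mem_Icc_zero_one (hν : 0 ≤ ν) (hr : r ∈ Icc (0 : ℝ) 1) : r ^ ν ∈ Icc (0 : ℝ) 1 :=
  ⟨rpow_nonneg hr.1 ν, rpow_le_one hr.1 hr.2 hν⟩

lemma antitoneOn_enthalpyDensity (ha : 0 ≤ a) (hν : 0 ≤ ν) (hα : 0 ≤ α) :
    AntitoneOn (enthalpyDensity a ν α) (Icc 0 1) := by
  intro s hs t ht hst
  have ht1 : 0 ≤ 1 - t ^ ν := sub_nonneg.2 (rpow_mem_Icc_zero_one hν ht).2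
  have hpow : s ^ ν ≤ t ^ ν := rpow_le_rpow hs.1 hst hν
  unfold enthalpyDensity
  gcongr

lemma enthalpyDensity_pos (ha : 0 < a) (hν : 0 < ν) (hr : r ∈ Ico (0 : ℝ) 1) :
    0 < enthalpyDensity a ν α r := by
  have hbase : 0 < 1 - r ^ ν := sub_pos.2 (rpow_lt_one hr.1 hr.2 hν)
  unfold enthalpyDensity
  positivity

lemma enthalpyDensity_zero (hν : ν ≠ 0) : enthalpyDensity a ν α 0 = 4 * π * a ^ α := by
  simp [enthalpyDensity, hν]

lemma enthalpyDensity_eq_mul_rpow (ha : 0 ≤ a) (hν : 0 < ν) (hr : r ∈ Icc (0 : ℝ) 1) :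
    enthalpyDensity a ν α r = enthalpyDensity a ν α 0 * (1 - r ^ ν) ^ α := by
  rw [enthalpyDensity_zero hν.ne', enthalpyDensity,
    mul_rpow ha (sub_nonneg.2 (rpow_mem_Icc_zero_one hν.le hr).2), mul_assoc (4 * π)]

lemma enthalpyDensity_zero_sub_le (ha : 0 < a) (hν : 0 < ν) (hr : r ∈ Icc (0 : ℝ) 1) :
    enthalpyDensity a ν α 0 - enthalpyDensity a ν α r ≤
      enthalpyDensity a ν α 0 * max 1 α * r ^ ν := by
  rw [enthalpyDensity_eq_mul_rpow ha.le hν hr, mul_assoc, ← mul_one_sub]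
  exact mul_le_mul_of_nonneg_left (one_sub_one_sub_rpow_le (rpow_mem_Icc_zero_one hν.le hr))
    (enthalpyDensity_pos ha hν (left_mem_Ico.2 one_pos)).le

lemma le_enthalpyDensity_mul_sub (ha : 0 < a) (hν : 0 < ν) (hα : 0 ≤ α)
    (hr : r ∈ Icc (0 : ℝ) 1) (ht : t ∈ Icc (0 : ℝ) 1) :
    enthalpyDensity a ν α 0 * min 1 α * r ^ ν * (1 - t ^ ν) ^ max 1 α ≤
      enthalpyDensity a ν α (r * t) - enthalpyDensity a ν α r := by
  have hrt : r * t ∈ Icc (0 : ℝ) 1 := ⟨mul_nonneg hr.1 ht.1, mul_le_one₀ hr.2 ht.1 ht.2⟩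
  rw [enthalpyDensity_eq_mul_rpow ha.le hν hrt, enthalpyDensity_eq_mul_rpow ha.le hν hr,
    ← mul_sub, mul_rpow hr.1 ht.1, mul_assoc, mul_assoc]
  exact mul_le_mul_of_nonneg_left (min_mul_one_sub_rpow_max_le_rpow_sub_rpow hα
    (rpow_mem_Icc_zero_one hν.le hr) (rpow_mem_Icc_zero_one hν.le ht))
    (enthalpyDensity_pos ha hν (left_mem_Ico.2 one_pos)).le

lemma meanDensity_enthalpyDensity_pos (d : ℕ) (ha : 0 < a) (hν : 0 < ν) (hα : 0 ≤ α)
    (hr : r ∈ Ioc (0 : ℝ) 1) : 0 < meanDensity d (enthalpyDensity a ν α) r :=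
  meanDensity_pos (continuous_enthalpyDensity hν.le hα) hr.1 fun _ hs =>
    enthalpyDensity_pos ha hν ⟨hs.1.le, hs.2.trans_le hr.2⟩

lemma exists_le_neg_mul_logDeriv_meanDensity_enthalpyDensity (d : ℕ) (ha : 0 < a) (hν : 0 < ν)
    (hα : 0 < α) : ∃ c > 0, ∀ r ∈ Ioc (0 : ℝ) 1,
      c * r ^ ν ≤ -(r * logDeriv (meanDensity d (enthalpyDensity a ν α)) r) := by
  have hk : Continuous fun t : ℝ => (1 - t ^ ν) ^ max 1 α :=
    (continuous_const.sub (continuous_rpow_const hν.le)).rpow_const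
      fun _ => Or.inr (zero_le_one.trans (le_max_left 1 α))
  have hI : 0 < ∫ t in (0 : ℝ)..1, (1 - t ^ ν) ^ max 1 α * t ^ d :=
    intervalIntegral.intervalIntegral_pos_of_pos_on
      (Continuous.intervalIntegrable (by fun_prop) _ _) (fun t ht => mul_pos
        (rpow_pos_of_pos (sub_pos.2 (rpow_lt_one ht.1.le ht.2 hν)) _) (pow_pos ht.1 d)) one_pos
  have hρ0 : 0 < enthalpyDensity a ν α 0 := enthalpyDensity_pos ha hν (left_mem_Ico.2 one_pos)
  refine ⟨(d + 1) ^ 2 * min 1 α * ∫ t in (0 : ℝ)..1, (1 - t ^ ν) ^ max 1 α * t ^ d,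
    by positivity, fun r hr => ?_⟩
  have hr' : r ∈ Icc (0 : ℝ) 1 := Ioc_subset_Icc_self hr
  have hrν : 0 ≤ r ^ ν := rpow_nonneg hr'.1 ν
  have hlower := le_neg_mul_logDeriv_meanDensity (d := d)
    (k := fun t => enthalpyDensity a ν α 0 * min 1 α * r ^ ν * (1 - t ^ ν) ^ max 1 α)
    (continuous_enthalpyDensity hν.le hα.le)
    ((antitoneOn_enthalpyDensity ha.le hν.le hα.le).mono (Icc_subset_Icc_right hr.2)) hr.1
    (meanDensity_enthalpyDensity_pos d ha hν hα.le hr) (continuous_const.mul hk)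
    (fun t ht => mul_nonneg (by positivity)
      (rpow_nonneg (sub_nonneg.2 (rpow_mem_Icc_zero_one hν.le ht).2) _))
    (fun t ht => le_enthalpyDensity_mul_sub ha hν hα.le hr' ht)
  refine le_of_eq_of_le ?_ hlower
  simp only [mul_assoc, intervalIntegral.integral_const_mul]
  field_simp

lemma exists_neg_mul_logDeriv_meanDensity_enthalpyDensity_le (d : ℕ) (ha : 0 < a) (hν : 0 < ν)
    (hα : 0 ≤ α) : ∃ c > 0, ∀ r ∈ Ioc (0 : ℝ) 1,
      -(r * logDeriv (meanDensity d (enthalpyDensity a ν α)) r) ≤ c * r ^ ν := by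
  have hG1 := meanDensity_enthalpyDensity_pos d ha hν hα (right_mem_Ioc.2 one_pos)
  have hρ0 : 0 < enthalpyDensity a ν α 0 := enthalpyDensity_pos ha hν (left_mem_Ico.2 one_pos)
  refine ⟨enthalpyDensity a ν α 0 * max 1 α / meanDensity d (enthalpyDensity a ν α) 1,
    by positivity, fun r hr => ?_⟩
  rw [div_mul_eq_mul_div]
  exact (neg_mul_logDeriv_meanDensity_le (continuous_enthalpyDensity hν.le hα)
    (antitoneOn_enthalpyDensity ha.le hν.le hα) hr hG1).trans
    (div_le_div_of_nonneg_right (enthalpyDensity_zero_sub_le ha hν (Ioc_subset_Icc_self hr))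
      hG1.le)

end EnthalpyDensity

theorem enthalpy_log_deriv_bounds_general (ν : ℝ) (hν : 0 < ν) (a α : ℝ) (ha : 0 < a)
    (hα : 0 < α) (w G g : ℝ → ℝ)
    (hw : ∀ r : ℝ, 0 ≤ r → w r = a * (1 - r ^ ν))
    (hG : ∀ r : ℝ, 0 < r → G r = (∫ s in (0:ℝ)..r, 4 * π * (w s) ^ α * s ^ 2) / r ^ 3)
    (hg : ∀ r : ℝ, 0 < r → g r = 3 * Real.sqrt (G r / 2)) :
    ∃ c₁ c₂ : ℝ, 0 < c₁ ∧ 0 < c₂ ∧ ∀ r ∈ Set.Ioc (0:ℝ) 1,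
      c₁ * r ^ ν ≤ -(r * deriv g r / g r) ∧ -(r * deriv g r / g r) ≤ c₂ * r ^ ν := by
  obtain ⟨c₁, hc₁, hlower⟩ :=
    exists_le_neg_mul_logDeriv_meanDensity_enthalpyDensity 2 ha hν hα
  obtain ⟨c₂, hc₂, hupper⟩ :=
    exists_neg_mul_logDeriv_meanDensity_enthalpyDensity_le 2 ha hν hα.le
  refine ⟨c₁ / 2, c₂ / 2, half_pos hc₁, half_pos hc₂, fun r hr => ?_⟩
  have hG_eq {x : ℝ} (hx : 0 < x) : G x = meanDensity 2 (enthalpyDensity a ν α) x :=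
    (hG x hx).trans <| meanDensity_congr hx.le fun s hs => by simp only [enthalpyDensity, hw s hs.1]
  have hg_eq : g =ᶠ[nhds r] fun x => 3 * √(meanDensity 2 (enthalpyDensity a ν α) x / 2) :=
    Filter.eventually_of_mem (Ioi_mem_nhds hr.1) fun x hx => by
      rw [hg x hx, hG_eq hx]
  have hlog : logDeriv g r = logDeriv (meanDensity 2 (enthalpyDensity a ν α)) r / 2 :=
    (logDeriv_congr_nhds hg_eq).eq_of_nhds.trans <| logDeriv_const_mul_sqrt_div
      (hasDerivAt_meanDensity (continuous_enthalpyDensity hν.le hα.le) hr.1.ne').differentiableAt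
      (meanDensity_enthalpyDensity_pos 2 ha hν hα.le hr) two_pos three_ne_zero
  rw [mul_div_assoc, ← logDeriv_apply, hlog]
  constructor <;> linarith [hlower r hr, hupper r hr]

/-- Lemma 1.1: the explicit enthalpy `w(r) = a(1 - r^n)` satisfies property (1.19):
`c₁ r^n ≤ -r g'(r)/g(r) ≤ c₂ r^n` on `(0,1]`, where
`G(r) = r^{-3} ∫_0^r 4π w(s)^α s² ds` and `g(r) = 3 √(G(r)/2)`. -/
theorem enthalpy_log_deriv_bounds (n : ℕ) (hn : 0 < n) (a α : ℝ) (ha : 0 < a) (hα : 0 < α)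
    (w G g : ℝ → ℝ)
    (hw : ∀ r : ℝ, w r = a * (1 - r ^ n))
    (hG : ∀ r : ℝ, 0 < r → G r = (∫ s in (0:ℝ)..r, 4 * π * (w s) ^ α * s ^ 2) / r ^ 3)
    (hg : ∀ r : ℝ, 0 < r → g r = 3 * Real.sqrt (G r / 2)) :
    ∃ c₁ c₂ : ℝ, 0 < c₁ ∧ 0 < c₂ ∧ ∀ r ∈ Set.Ioc (0:ℝ) 1,
      c₁ * r ^ n ≤ -(r * deriv g r / g r) ∧ -(r * deriv g r / g r) ≤ c₂ * r ^ n := by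
  simpa only [rpow_natCast] using enthalpy_log_deriv_bounds_general n (Nat.cast_pos.2 hn) a α ha hα
    w G g (fun r _ => by rw [hw, rpow_natCast]) hG hg
end

section
/- Let G > 0, χ₀ > 0, χ₁ < 0, and let T ≥ χ₀/(−χ₁). Then there exists no twice-differentiable function χ : [0,T] → ℝ with χ(s) > 0 for all s ∈ [0,T], χ(0) = χ₀, χ'(0) = χ₁, and χ''(s) = − G/χ(s)² for all s ∈ [0,T]. In other words, every positive solution of the dust ODE with inward initial velocity χ₁ < 0 ceases to be positive no later than time χ₀/(−χ₁). -/
/-!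
Gravity only pulls inward, so a positive solution of the dust equation is concave and stays below
its tangent at time `0`, the free motion `χ₀ + χ₁ t`, which vanishes at `t = χ₀ / (-χ₁)`.
-/

open Set

theorem concaveOn_of_hasDerivWithinAt2_nonpos' {D : Set ℝ} (hD : Convex ℝ D) {f f' f'' : ℝ → ℝ}
    (hf' : ∀ x ∈ D, HasDerivWithinAt f (f' x) D x)
    (hf'' : ∀ x ∈ D, HasDerivWithinAt f' (f'' x) D x)
    (hf''₀ : ∀ x ∈ D, f'' x ≤ 0) : ConcaveOn ℝ D f :=
  concaveOn_of_hasDerivWithinAt2_nonpos hD (fun x hx ↦ (hf' x hx).continuousWithinAt)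
    (fun x hx ↦ (hf' x (interior_subset hx)).mono interior_subset)
    (fun x hx ↦ (hf'' x (interior_subset hx)).mono interior_subset)
    (fun x hx ↦ hf''₀ x (interior_subset hx))

theorem le_add_mul_sub_of_concaveOn_of_hasDerivWithinAt {S : Set ℝ} {f : ℝ → ℝ} {f' x y : ℝ}
    (hf : ConcaveOn ℝ S f) (hx : x ∈ S) (hy : y ∈ S) (hxy : x ≤ y)
    (hf' : HasDerivWithinAt f f' S x) : f y ≤ f x + f' * (y - x) := by
  rcases hxy.eq_or_lt with rfl | hlt
  · simp
  · have hslope : (f y - f x) / (y - x) ≤ f' := by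
      simpa only [slope_def_field] using hf.slope_le_of_hasDerivWithinAt hx hy hlt hf'
    rw [div_le_iff₀ (sub_pos.2 hlt)] at hslope
    linarith

theorem dust_collapse_in_finite_time_general {χ : ℝ → ℝ} {χ₁ T : ℝ} (hT₀ : 0 ≤ T)
    (hχ : ConcaveOn ℝ (Icc 0 T) χ) (hχ₁ : HasDerivWithinAt χ χ₁ (Icc 0 T) 0)
    (h1 : χ₁ < 0) (hT : χ 0 / (-χ₁) ≤ T) : χ T ≤ 0 := by
  have htangent : χ T ≤ χ 0 + χ₁ * (T - 0) :=
    le_add_mul_sub_of_concaveOn_of_hasDerivWithinAt hχ (left_mem_Icc.2 hT₀) (right_mem_Icc.2 hT₀)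
      hT₀ hχ₁
  rw [div_le_iff₀ (neg_pos.2 h1)] at hT
  linarith

/-- Finite-time gravitational collapse for the dust ODE: no positive solution of
`χ'' = -G/χ²` with `χ(0) = χ₀ > 0` and inward velocity `χ'(0) = χ₁ < 0` can stay
positive up to any time `T ≥ χ₀/(-χ₁)`. -/
theorem dust_collapse_in_finite_time (G χ₀ χ₁ T : ℝ) (hG : 0 < G) (h0 : 0 < χ₀)
    (h1 : χ₁ < 0) (hT : χ₀ / (-χ₁) ≤ T) :
    ¬ ∃ χ χ' χ'' : ℝ → ℝ,
      (∀ s ∈ Set.Icc (0:ℝ) T,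
        HasDerivWithinAt χ (χ' s) (Set.Icc 0 T) s ∧
        HasDerivWithinAt χ' (χ'' s) (Set.Icc 0 T) s ∧
        0 < χ s ∧ χ'' s = -G / (χ s) ^ 2) ∧
      χ 0 = χ₀ ∧ χ' 0 = χ₁ := by
  rintro ⟨χ, χ', χ'', h, rfl, rfl⟩
  have hT₀ : 0 ≤ T := (div_pos h0 (neg_pos.2 h1)).le.trans hT
  have hχ : ConcaveOn ℝ (Icc 0 T) χ :=
    concaveOn_of_hasDerivWithinAt2_nonpos' (convex_Icc 0 T) (fun s hs ↦ (h s hs).1)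
      (fun s hs ↦ (h s hs).2.1) fun s hs ↦ (h s hs).2.2.2.trans_le <|
        div_nonpos_of_nonpos_of_nonneg (neg_nonpos.2 hG.le) (sq_nonneg (χ s))
  exact (h T (right_mem_Icc.2 hT₀)).2.2.1.not_ge <|
    dust_collapse_in_finite_time_general hT₀ hχ (h 0 (left_mem_Icc.2 hT₀)).1 h1 hT
end

section
/- Let γ ∈ (1, 4/3), set γ̄ = 4/3 − γ, and fix a positive integer a. For integers n with n·γ̄ > 1 define δ(n) = 2·(4/3 − γ − 1/n) > 0. Then there exists n* = n*(γ, a) such that for all integers n ≥ n*: ⌊2/(3δ(n))⌋·δ(n) + 2/n < 2/3 < (⌊2/(3δ(n))⌋ + 1)·δ(n) − a/n, and moreover ⌊2/(3δ(n))⌋ = ⌊1/(3γ̄)⌋. -/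
/-!
Put `T = 1/3`, `g = γ̄` and `ε = 1/n`, so that `δ = 2 (g - ε)`. With `m = ⌊T / g⌋` we have
`m g ≤ T < (m + 1) g`, and strict inequalities survive a small perturbation of `ε = 0`. If instead
`m g = T`, then `m ≥ 2` because `γ ≠ 1` means `g ≠ T`, so replacing `g` by `g - ε` lowers the
product by `m ε`, which more than pays for the extra `ε`. Finally `T / (g - ε)` approaches `T / g`
from the right, and the floor is right-continuous.
-/

open Filter Topology

section FloorPerturbation

variable {K : Type*} [Field K] [LinearOrder K] [IsStrictOrderedRing K] [FloorRing K]
  [TopologicalSpace K] [OrderTopology K] {T g : K}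

theorem eventually_floor_div_mul_sub_add_lt (hT : 0 < T) (hg : 0 < g) (hgT : g ≠ T) :
    ∀ᶠ ε in 𝓝[>] (0 : K), ⌊T / g⌋ * (g - ε) + ε < T := by
  have hle : ⌊T / g⌋ * g ≤ T := (le_div_iff₀ hg).mp (Int.floor_le _)
  rcases hle.lt_or_eq with hlt | heq
  · have hcont : Continuous fun ε : K => ⌊T / g⌋ * (g - ε) + ε := by fun_prop
    exact nhdsWithin_le_nhds (hcont.continuousAt.eventually_lt_const (by simpa using hlt))
  · have hpos : 0 < ⌊T / g⌋ := by
      exact_mod_cast pos_of_mul_pos_left (heq ▸ hT) hg.le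
    have hne : ⌊T / g⌋ ≠ 1 := fun h => hgT (by simpa [h] using heq)
    have hone : (1 : K) < ⌊T / g⌋ := by exact_mod_cast show 1 < ⌊T / g⌋ by omega
    filter_upwards [self_mem_nhdsWithin] with ε (hε : 0 < ε)
    calc ⌊T / g⌋ * (g - ε) + ε = T - (⌊T / g⌋ - 1) * ε := by
          linear_combination heq
      _ < T := sub_lt_self T (mul_pos (sub_pos.mpr hone) hε)

theorem eventually_lt_floor_div_add_one_mul_sub_sub (hg : 0 < g) (c : K) :
    ∀ᶠ ε in 𝓝 (0 : K), T < (⌊T / g⌋ + 1) * (g - ε) - c * ε := by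
  have hlt : T < (⌊T / g⌋ + 1) * g := (div_lt_iff₀ hg).mp (Int.lt_floor_add_one _)
  have hcont : Continuous fun ε : K => (⌊T / g⌋ + 1) * (g - ε) - c * ε := by fun_prop
  exact hcont.continuousAt.eventually_const_lt (by simpa using hlt)

theorem eventually_floor_div_sub_eq (hT : 0 ≤ T) (hg : 0 < g) :
    ∀ᶠ ε in 𝓝[>] (0 : K), ⌊T / (g - ε)⌋ = ⌊T / g⌋ := by
  have hright : Tendsto (fun ε => T / (g - ε)) (𝓝[>] 0) (𝓝[≥] (T / g)) := by
    refine tendsto_nhdsWithin_iff.mpr ⟨?_, ?_⟩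
    · have hcont : ContinuousAt (fun ε => T / (g - ε)) 0 :=
        continuousAt_const.div (by fun_prop) (by simpa using hg.ne')
      simpa using hcont.tendsto.mono_left nhdsWithin_le_nhds
    · filter_upwards [Ioo_mem_nhdsGT hg] with ε ⟨hε, hεg⟩
      exact div_le_div_of_nonneg_left hT (sub_pos.mpr hεg) (sub_le_self g hε.le)
  exact tendsto_pure.mp ((tendsto_floor_right_pure_floor (T / g)).comp hright)

theorem eventually_floor_div_sub_inequalities (hT : 0 < T) (hg : 0 < g) (hgT : g ≠ T) (c : K) :
    ∀ᶠ ε in 𝓝[>] (0 : K), 0 < g - ε ∧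
      ⌊T / (g - ε)⌋ * (g - ε) + ε < T ∧
      T < (⌊T / (g - ε)⌋ + 1) * (g - ε) - c * ε ∧
      ⌊T / (g - ε)⌋ = ⌊T / g⌋ := by
  filter_upwards [Ioo_mem_nhdsGT hg, eventually_floor_div_mul_sub_add_lt hT hg hgT,
    nhdsWithin_le_nhds (eventually_lt_floor_div_add_one_mul_sub_sub hg c),
    eventually_floor_div_sub_eq hT.le hg] with ε hε hlower hupper hfloor
  rw [hfloor]
  exact ⟨sub_pos.mpr hε.2, hlower, hupper, rfl⟩

end FloorPerturbation

theorem delta_floor_inequalities_general {γ : ℝ} (hγ : γ < 4 / 3) (hγ_ne : γ ≠ 1)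
    {γbar : ℝ} (hγbar : γbar = 4 / 3 - γ) (a : ℝ) :
    ∀ᶠ n : ℕ in atTop, ∀ δ : ℝ, δ = 2 * (4 / 3 - γ - 1 / (n : ℝ)) →
      0 < δ ∧
      (⌊2 / (3 * δ)⌋ : ℝ) * δ + 2 / (n : ℝ) < 2 / 3 ∧
      2 / 3 < ((⌊2 / (3 * δ)⌋ : ℝ) + 1) * δ - a / (n : ℝ) ∧
      ⌊2 / (3 * δ)⌋ = ⌊1 / (3 * γbar)⌋ := by
  have hpos : 0 < γbar := by linarith
  have hne : γbar ≠ 1 / 3 := fun h => hγ_ne (by linarith)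
  have hinv : Tendsto (fun n : ℕ => (n : ℝ)⁻¹) atTop (𝓝[>] 0) :=
    tendsto_inv_atTop_nhdsGT_zero.comp tendsto_natCast_atTop_atTop
  filter_upwards [hinv.eventually
    (eventually_floor_div_sub_inequalities (by norm_num) hpos hne (a / 2))]
  rintro n ⟨hgap, hlower, hupper, hfloor⟩ δ hδ
  replace hδ : δ = 2 * (γbar - (n : ℝ)⁻¹) := by rw [hδ, hγbar, one_div]
  have hquot : 2 / (3 * δ) = (1 / 3) / (γbar - (n : ℝ)⁻¹) := by rw [hδ]; field_simp
  rw [hquot, ← div_div 1 3 γbar, hδ, div_eq_mul_inv 2 (n : ℝ), div_eq_mul_inv a]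
  exact ⟨by linarith, by linarith, by linarith, hfloor⟩

/-- Lemma 2.3: for `γ ∈ (1, 4/3)`, `γ̄ = 4/3 - γ` and `δ(n) = 2(4/3 - γ - 1/n)`, for all
sufficiently large `n` we have `⌊2/(3δ)⌋ δ + 2/n < 2/3 < (⌊2/(3δ)⌋+1) δ - a/n` and
`⌊2/(3δ(n))⌋ = ⌊1/(3γ̄)⌋`. -/
theorem delta_floor_inequalities (γ : ℝ) (hγ : γ ∈ Set.Ioo (1:ℝ) (4/3))
    (γbar : ℝ) (hγbar : γbar = 4/3 - γ) (a : ℕ) (ha : 0 < a) :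
    ∃ nstar : ℕ, ∀ n : ℕ, nstar ≤ n → 1 < (n:ℝ) * γbar →
      ∀ δ : ℝ, δ = 2 * (4/3 - γ - 1/(n:ℝ)) →
        0 < δ ∧
        (⌊2 / (3 * δ)⌋ : ℝ) * δ + 2/(n:ℝ) < 2/3 ∧
        2/3 < ((⌊2 / (3 * δ)⌋ : ℝ) + 1) * δ - (a:ℝ)/(n:ℝ) ∧
        ⌊2 / (3 * δ)⌋ = ⌊1 / (3 * γbar)⌋ := by
  obtain ⟨nstar, h⟩ := eventually_atTop.mp
    (delta_floor_inequalities_general hγ.2 hγ.1.ne' hγbar a)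
  exact ⟨nstar, fun n hn _ => h n hn⟩
end

section
/- Let n be a positive integer, let λ ∈ (0,1), and let β ∈ ℝ satisfy β − λ + 2/n > −1. Then there exists a constant C > 0, depending only on n, λ, β, such that for all r ∈ (0,1] and all τ ∈ (0,1]: ∫_0^τ t^β · p_{λ,−2/n}(r^n/t) dt ≤ C · τ^{β+1} · p_{λ,−2/n}(r^n/τ), where p_{λ,−2/n}(x) = x^{λ − 2/n}/(1+x)^{λ} for x > 0. -/
/-!
The weight `p_{μ,ν}(x) = x ^ (μ + ν) / (1 + x) ^ μ` behaves like `x ^ (μ + ν)` near `0` and like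
`x ^ ν` near `∞`, and with `κ = max (μ + ν) ν` the function `t ↦ t ^ κ * p_{μ,ν}(a / t)` is
increasing. Bounding it on `(0, τ]` by its value at `τ` leaves the integral of `t ^ (β - κ)`.
-/

open MeasureTheory Set

section MonotoneOn

variable {g : ℝ → ℝ} {γ τ : ℝ}

theorem intervalIntegrable_rpow_mul_of_monotoneOn (hγ : -1 < γ) (hτ : 0 ≤ τ)
    (hg : MonotoneOn g (Ioc 0 τ)) (hg₀ : ∀ t ∈ Ioc 0 τ, 0 ≤ g t) :
    IntervalIntegrable (fun t ↦ t ^ γ * g t) volume 0 τ := by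
  have hpow : IntegrableOn (fun t : ℝ ↦ t ^ γ) (Ioc 0 τ) :=
    (intervalIntegral.intervalIntegrable_rpow' hγ).1
  have hmeas : AEStronglyMeasurable g (volume.restrict (Ioc 0 τ)) :=
    (aemeasurable_restrict_of_monotoneOn measurableSet_Ioc hg).aestronglyMeasurable
  have hbound : ∀ᵐ t ∂volume.restrict (Ioc 0 τ), ‖g t‖ ≤ g τ := by
    filter_upwards [ae_restrict_mem measurableSet_Ioc] with t ht
    rw [Real.norm_of_nonneg (hg₀ t ht)]
    exact hg ht ⟨ht.1.trans_le ht.2, le_rfl⟩ ht.2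
  rw [intervalIntegrable_iff_integrableOn_Ioc_of_le hτ]
  exact hpow.mul_bdd hmeas hbound

theorem integral_rpow_mul_le_of_monotoneOn (hγ : -1 < γ) (hτ : 0 ≤ τ)
    (hg : MonotoneOn g (Ioc 0 τ)) (hg₀ : ∀ t ∈ Ioc 0 τ, 0 ≤ g t) :
    ∫ t in (0 : ℝ)..τ, t ^ γ * g t ≤ τ ^ (γ + 1) / (γ + 1) * g τ := by
  calc ∫ t in (0 : ℝ)..τ, t ^ γ * g t
      ≤ ∫ t in (0 : ℝ)..τ, t ^ γ * g τ := by
        refine intervalIntegral.integral_mono_on_of_le_Ioo hτ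
          (intervalIntegrable_rpow_mul_of_monotoneOn hγ hτ hg hg₀)
          ((intervalIntegral.intervalIntegrable_rpow' hγ).mul_const _) fun t ht ↦ ?_
        have hgt : g t ≤ g τ := hg ⟨ht.1, ht.2.le⟩ ⟨ht.1.trans ht.2, le_rfl⟩ ht.2.le
        exact mul_le_mul_of_nonneg_left hgt (Real.rpow_nonneg ht.1.le γ)
    _ = τ ^ (γ + 1) / (γ + 1) * g τ := by
        rw [intervalIntegral.integral_mul_const, integral_rpow (Or.inl hγ),
          Real.zero_rpow (by linarith), sub_zero]

end MonotoneOn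

/-- The weight `p_{μ,ν}(x) = x ^ (μ + ν) / (1 + x) ^ μ`, which is meant for `0 < x`; it is evaluated
at the self-similar variable `x = r ^ n / t`. -/
noncomputable def selfSimilarWeight (μ ν x : ℝ) : ℝ :=
  x ^ (μ + ν) / (1 + x) ^ μ

namespace selfSimilarWeight

variable {μ ν a t : ℝ}

theorem nonneg {x : ℝ} (hx : 0 ≤ x) : 0 ≤ selfSimilarWeight μ ν x := by
  unfold selfSimilarWeight
  positivity

theorem rpow_mul_apply_div (κ : ℝ) (ha : 0 < a) (ht : 0 < t) :
    t ^ κ * selfSimilarWeight μ ν (a / t) = a ^ (μ + ν) * (t ^ (κ - ν) / (t + a) ^ μ) := by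
  have hsum : 1 + a / t = (t + a) / t := by field_simp
  rw [selfSimilarWeight, hsum, Real.div_rpow ha.le ht.le, Real.div_rpow (by positivity) ht.le,
    Real.rpow_add ht, Real.rpow_sub ht]
  field_simp

theorem monotoneOn_rpow_max_mul_apply_div (ha : 0 < a) :
    MonotoneOn (fun t ↦ t ^ max (μ + ν) ν * selfSimilarWeight μ ν (a / t)) (Ioi 0) := by
  intro s (hs : 0 < s) t (ht : 0 < t) hst
  simp only [rpow_mul_apply_div _ ha hs, rpow_mul_apply_div _ ha ht]
  refine mul_le_mul_of_nonneg_left ?_ (by positivity)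
  rcases le_total 0 μ with hμ | hμ
  · have hfrac : s / (s + a) ≤ t / (t + a) := by
      rw [div_le_div_iff₀ (by positivity) (by positivity)]
      linarith [mul_le_mul_of_nonneg_right hst ha.le]
    rw [max_eq_left (by linarith), add_sub_cancel_right, ← Real.div_rpow hs.le (by positivity),
      ← Real.div_rpow ht.le (by positivity)]
    exact Real.rpow_le_rpow (by positivity) hfrac hμ
  · rw [max_eq_right (by linarith), sub_self, Real.rpow_zero, Real.rpow_zero]
    exact one_div_le_one_div_of_le (by positivity)
      (Real.rpow_le_rpow_of_nonpos (by positivity) (by linarith) hμ)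

end selfSimilarWeight

theorem weighted_integral_estimate_below_general {μ ν β a τ : ℝ} (hβ : max (μ + ν) ν < β + 1)
    (ha : 0 < a) (hτ : 0 < τ) :
    IntervalIntegrable (fun t ↦ t ^ β * selfSimilarWeight μ ν (a / t)) volume 0 τ ∧
      ∫ t in (0 : ℝ)..τ, t ^ β * selfSimilarWeight μ ν (a / t) ≤
        (β + 1 - max (μ + ν) ν)⁻¹ * τ ^ (β + 1) * selfSimilarWeight μ ν (a / τ) := by
  set κ := max (μ + ν) ν
  let g : ℝ → ℝ := fun t ↦ t ^ κ * selfSimilarWeight μ ν (a / t)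
  have hγ : -1 < β - κ := by linarith
  have hg : MonotoneOn g (Ioc 0 τ) :=
    (selfSimilarWeight.monotoneOn_rpow_max_mul_apply_div ha).mono Ioc_subset_Ioi_self
  have hg₀ : ∀ t ∈ Ioc 0 τ, 0 ≤ g t := fun t ht ↦
    mul_nonneg (Real.rpow_nonneg ht.1.le κ) (selfSimilarWeight.nonneg (div_pos ha ht.1).le)
  have hsplit : EqOn (fun t ↦ t ^ (β - κ) * g t)
      (fun t ↦ t ^ β * selfSimilarWeight μ ν (a / t)) (uIoc 0 τ) := by
    intro t ht
    rw [uIoc_of_le hτ.le] at ht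
    simp only [g, ← mul_assoc, ← Real.rpow_add ht.1, sub_add_cancel]
  refine ⟨(intervalIntegrable_rpow_mul_of_monotoneOn hγ hτ.le hg hg₀).congr hsplit, ?_⟩
  calc ∫ t in (0 : ℝ)..τ, t ^ β * selfSimilarWeight μ ν (a / t)
      = ∫ t in (0 : ℝ)..τ, t ^ (β - κ) * g t :=
        intervalIntegral.integral_congr_ae (.of_forall fun _ ht ↦ (hsplit ht).symm)
    _ ≤ τ ^ (β - κ + 1) / (β - κ + 1) * g τ :=
        integral_rpow_mul_le_of_monotoneOn hγ hτ.le hg hg₀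
    _ = (β + 1 - κ)⁻¹ * τ ^ (β + 1) * selfSimilarWeight μ ν (a / τ) := by
        have hpow : τ ^ (β + 1) = τ ^ (β - κ + 1) * τ ^ κ := by
          rw [← Real.rpow_add hτ]
          ring_nf
        rw [hpow, show β + 1 - κ = β - κ + 1 by ring]
        ring

/-- Lemma 2.14 (i): the weighted integral estimate
`∫_0^τ t^β p_{λ,-2/n}(r^n/t) dt ≲ τ^{β+1} p_{λ,-2/n}(r^n/τ)`, where
`p_{λ,-2/n}(x) = x^{λ-2/n}/(1+x)^λ`. -/
theorem weighted_integral_estimate_below (n : ℕ) (hn : 0 < n) (lam : ℝ)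
    (hlam : lam ∈ Set.Ioo (0:ℝ) 1) (β : ℝ) (hβ : -1 < β - lam + 2/(n:ℝ)) :
    ∃ C : ℝ, 0 < C ∧ ∀ r ∈ Set.Ioc (0:ℝ) 1, ∀ τ ∈ Set.Ioc (0:ℝ) 1,
      (∫ t in (0:ℝ)..τ,
          t ^ β * ((r ^ n / t) ^ (lam - 2/(n:ℝ)) / (1 + r ^ n / t) ^ lam))
        ≤ C * τ ^ (β + 1) * ((r ^ n / τ) ^ (lam - 2/(n:ℝ)) / (1 + r ^ n / τ) ^ lam) := by
  have hmax : max (lam + -(2 / (n : ℝ))) (-(2 / (n : ℝ))) < β + 1 :=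
    max_lt (by linarith) (by linarith [hlam.1])
  refine ⟨_, inv_pos.2 (sub_pos.2 hmax), fun r hr τ hτ ↦ ?_⟩
  simpa only [selfSimilarWeight, ← sub_eq_add_neg] using
    (weighted_integral_estimate_below_general hmax (pow_pos hr.1 n) hτ.1).2
end

section
/- Let n be a positive integer, let λ ∈ (0,1), and let b ∈ ℝ satisfy b + 2/n < −1. Then there exists a constant C > 0, depending only on n, λ, b, such that for all r ∈ (0,1] and all τ ∈ (0,1]: ∫_τ^1 t^b · p_{λ,−2/n}(r^n/t) dt ≤ C · τ^{b+1} · p_{λ,−2/n}(r^n/τ), where p_{λ,−2/n}(x) = x^{λ − 2/n}/(1+x)^{λ} for x > 0. -/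
/-!
Write `σ = min ν (μ + ν)`. Since `x ^ (-σ) * p_{μ,ν} x` is nondecreasing in `x`, passing from `τ` to
`t ≥ τ` multiplies `p_{μ,ν} (a / t)` by at most `(t / τ) ^ (-σ)`. The integral is therefore at most
`τ ^ σ * p_{μ,ν} (a / τ) * ∫ t ^ (b - σ)`, and `b - σ < -1` makes the last integral comparable to
`τ ^ (b - σ + 1)`.
-/

open Real Set MeasureTheory

section PowerWeight

variable {b s c τ T : ℝ}

theorem integral_rpow_le_of_lt_neg_one (hc : c < -1) (hτ : 0 < τ) (hT : 0 < T) :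
    ∫ t in τ..T, t ^ c ≤ (-(c + 1))⁻¹ * τ ^ (c + 1) := by
  have hc' : 0 < -(c + 1) := by linarith
  calc ∫ t in τ..T, t ^ c = (T ^ (c + 1) - τ ^ (c + 1)) / (c + 1) :=
        integral_rpow (Or.inr ⟨hc.ne, notMem_uIcc_of_lt hτ hT⟩)
    _ = (-(c + 1))⁻¹ * (τ ^ (c + 1) - T ^ (c + 1)) := by
        rw [← neg_div_neg_eq, neg_sub, inv_mul_eq_div]
    _ ≤ (-(c + 1))⁻¹ * τ ^ (c + 1) := by
        gcongr
        exact sub_le_self _ (rpow_nonneg hT.le _)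

theorem intervalIntegrable_rpow_of_pos (hτ : 0 < τ) (hT : 0 < T) :
    IntervalIntegrable (fun t : ℝ => t ^ c) volume τ T :=
  intervalIntegral.intervalIntegrable_rpow (Or.inr (notMem_uIcc_of_lt hτ hT))

theorem integral_rpow_mul_le_of_le_rpow_mul {f : ℝ → ℝ} (hbs : b + s < -1) (hτ : 0 < τ)
    (hτT : τ ≤ T) (hint : IntervalIntegrable (fun t => t ^ b * f t) volume τ T) (hfτ : 0 ≤ f τ)
    (hf : ∀ t ∈ Icc τ T, f t ≤ (t / τ) ^ s * f τ) :
    ∫ t in τ..T, t ^ b * f t ≤ (-(b + s + 1))⁻¹ * τ ^ (b + 1) * f τ := by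
  have hT : 0 < T := hτ.trans_le hτT
  have pointwise : ∀ t ∈ Icc τ T, t ^ b * f t ≤ t ^ (b + s) * (f τ / τ ^ s) := by
    intro t ht
    have ht0 : 0 < t := hτ.trans_le ht.1
    calc t ^ b * f t ≤ t ^ b * ((t / τ) ^ s * f τ) := by
          gcongr
          exact hf t ht
      _ = t ^ (b + s) * (f τ / τ ^ s) := by
          rw [rpow_add ht0, div_rpow ht0.le hτ.le]
          ring
  calc ∫ t in τ..T, t ^ b * f t ≤ ∫ t in τ..T, t ^ (b + s) * (f τ / τ ^ s) :=
        intervalIntegral.integral_mono_on hτT hint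
          ((intervalIntegrable_rpow_of_pos hτ hT).mul_const _) pointwise
    _ = (∫ t in τ..T, t ^ (b + s)) * (f τ / τ ^ s) := intervalIntegral.integral_mul_const _ _
    _ ≤ (-(b + s + 1))⁻¹ * τ ^ (b + s + 1) * (f τ / τ ^ s) := by
        gcongr
        exact integral_rpow_le_of_lt_neg_one hbs hτ hT
    _ = (-(b + s + 1))⁻¹ * τ ^ (b + 1) * f τ := by
        have hτs : τ ^ s ≠ 0 := (rpow_pos_of_pos hτ s).ne'
        rw [add_right_comm b s 1, rpow_add hτ (b + 1) s, mul_assoc, mul_assoc, mul_assoc,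
          mul_div_cancel₀ _ hτs]

end PowerWeight

/-- The two-parameter profile `p_{μ,ν}` of the paper, which behaves like `x ^ (μ + ν)` near `0` and
like `x ^ ν` near `∞`. It is meant for `x > 0` only. -/
noncomputable def powerProfile (μ ν x : ℝ) : ℝ :=
  x ^ (μ + ν) / (1 + x) ^ μ

section PowerProfile

variable {μ ν b a t τ T x y : ℝ}

theorem powerProfile_nonneg (hx : 0 ≤ x) : 0 ≤ powerProfile μ ν x := by
  unfold powerProfile
  positivity

theorem continuousOn_powerProfile : ContinuousOn (powerProfile μ ν) (Ioi 0) := by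
  have one_add_pos : ∀ x ∈ Ioi (0 : ℝ), 0 < 1 + x := fun x hx => add_pos one_pos hx
  exact (continuousOn_id.rpow_const fun x hx => Or.inl (ne_of_gt hx)).div
    ((continuousOn_const.add continuousOn_id).rpow_const
      fun x hx => Or.inl (one_add_pos x hx).ne')
    fun x hx => (rpow_pos_of_pos (one_add_pos x hx) μ).ne'

theorem powerProfile_eq_rpow_mul (hx : 0 < x) (σ : ℝ) :
    powerProfile μ ν x = x ^ σ * ((x / (1 + x)) ^ (μ + ν - σ) * (1 + x) ^ (ν - σ)) := by
  have hx1 : 0 < 1 + x := by positivity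
  calc powerProfile μ ν x = x ^ (σ + (μ + ν - σ)) * (1 + x) ^ (-(μ + ν - σ) + (ν - σ)) := by
        rw [powerProfile, div_eq_mul_inv, ← rpow_neg hx1.le]
        ring_nf
    _ = x ^ σ * ((x / (1 + x)) ^ (μ + ν - σ) * (1 + x) ^ (ν - σ)) := by
        rw [rpow_add hx, rpow_add hx1, rpow_neg hx1.le, div_rpow hx.le hx1.le]
        ring

theorem powerProfile_le_rpow_mul (hx : 0 < x) (hxy : x ≤ y) :
    powerProfile μ ν x ≤ (x / y) ^ min ν (μ + ν) * powerProfile μ ν y := by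
  set σ := min ν (μ + ν)
  have hy : 0 < y := hx.trans_le hxy
  have hμν : 0 ≤ μ + ν - σ := sub_nonneg.2 (min_le_right _ _)
  have hν : 0 ≤ ν - σ := sub_nonneg.2 (min_le_left _ _)
  have ratio_le : x / (1 + x) ≤ y / (1 + y) := by
    rw [div_le_div_iff₀ (by positivity) (by positivity)]
    linarith
  calc powerProfile μ ν x
      = x ^ σ * ((x / (1 + x)) ^ (μ + ν - σ) * (1 + x) ^ (ν - σ)) :=
        powerProfile_eq_rpow_mul hx σ
    _ ≤ x ^ σ * ((y / (1 + y)) ^ (μ + ν - σ) * (1 + y) ^ (ν - σ)) := by gcongr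
    _ = (x / y) ^ σ * powerProfile μ ν y := by
        have hyσ : y ^ σ ≠ 0 := (rpow_pos_of_pos hy σ).ne'
        rw [powerProfile_eq_rpow_mul hy σ, div_rpow hx.le hy.le,
          ← mul_assoc (x ^ σ / y ^ σ), div_mul_cancel₀ _ hyσ]

theorem powerProfile_div_le_rpow_mul (ha : 0 < a) (hτ : 0 < τ) (ht : τ ≤ t) :
    powerProfile μ ν (a / t) ≤ (t / τ) ^ (-min ν (μ + ν)) * powerProfile μ ν (a / τ) := by
  have ht0 : 0 < t := hτ.trans_le ht
  have hratio : a / t / (a / τ) = (t / τ)⁻¹ := by field_simp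
  rw [rpow_neg (by positivity), ← inv_rpow (by positivity), ← hratio]
  exact powerProfile_le_rpow_mul (by positivity) (by gcongr)

theorem intervalIntegrable_rpow_mul_powerProfile_div (ha : 0 < a) (hτ : 0 < τ) (hT : 0 < T) :
    IntervalIntegrable (fun t => t ^ b * powerProfile μ ν (a / t)) volume τ T := by
  have pos_of_mem : ∀ t ∈ uIcc τ T, 0 < t := fun t ht => (lt_min hτ hT).trans_le ht.1
  have hdiv : ContinuousOn (fun t => a / t) (uIcc τ T) :=
    continuousOn_const.div continuousOn_id fun t ht => (pos_of_mem t ht).ne'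
  exact (intervalIntegrable_rpow_of_pos hτ hT).mul_continuousOn
    (continuousOn_powerProfile.comp hdiv fun t ht => div_pos ha (pos_of_mem t ht))

theorem weighted_integral_estimate_above_general (hb : b - min ν (μ + ν) < -1) (ha : 0 < a)
    (hτ : 0 < τ) (hτT : τ ≤ T) :
    ∫ t in τ..T, t ^ b * powerProfile μ ν (a / t) ≤
      (-(b - min ν (μ + ν) + 1))⁻¹ * τ ^ (b + 1) * powerProfile μ ν (a / τ) :=
  integral_rpow_mul_le_of_le_rpow_mul hb hτ hτT
    (intervalIntegrable_rpow_mul_powerProfile_div ha hτ (hτ.trans_le hτT))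
    (powerProfile_nonneg (by positivity))
    fun _ ht => powerProfile_div_le_rpow_mul ha hτ ht.1

end PowerProfile

/-- Lemma 2.14 (ii): the weighted integral estimate
`∫_τ^1 t^b p_{λ,-2/n}(r^n/t) dt ≲ τ^{b+1} p_{λ,-2/n}(r^n/τ)`, where
`p_{λ,-2/n}(x) = x^{λ-2/n}/(1+x)^λ`. -/
theorem weighted_integral_estimate_above (n : ℕ) (hn : 0 < n) (lam : ℝ)
    (hlam : lam ∈ Set.Ioo (0:ℝ) 1) (b : ℝ) (hb : b + 2/(n:ℝ) < -1) :
    ∃ C : ℝ, 0 < C ∧ ∀ r ∈ Set.Ioc (0:ℝ) 1, ∀ τ ∈ Set.Ioc (0:ℝ) 1,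
      (∫ t in τ..(1:ℝ),
          t ^ b * ((r ^ n / t) ^ (lam - 2/(n:ℝ)) / (1 + r ^ n / t) ^ lam))
        ≤ C * τ ^ (b + 1) * ((r ^ n / τ) ^ (lam - 2/(n:ℝ)) / (1 + r ^ n / τ) ^ lam) := by
  have hmin : min (-(2 / (n : ℝ))) (lam - 2 / (n : ℝ)) = -(2 / (n : ℝ)) :=
    min_eq_left (by linarith [hlam.1])
  refine ⟨(-(b + 2 / (n : ℝ) + 1))⁻¹, inv_pos.2 (by linarith), fun r hr τ hτ => ?_⟩
  simpa only [powerProfile, ← sub_eq_add_neg, hmin, sub_neg_eq_add] using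
    weighted_integral_estimate_above_general (μ := lam) (ν := -(2 / (n : ℝ)))
      (by rwa [← sub_eq_add_neg, hmin, sub_neg_eq_add]) (pow_pos hr.1 n) hτ.1 hτ.2
end

section
/- Let n be a positive integer, c₁, c₂ > 0, and let g : [0,1] → (0,∞) be continuously differentiable with c₁ r^n ≤ − r·g'(r)/g(r) ≤ c₂ r^n for all r ∈ [0,1]. Define M_g(τ,r) = (τ − 1)·r·g'(r)/g(r) and 𝒥(τ,r) = τ² + (2/3)·τ·M_g(τ,r). Then for every nonnegative integer m and every nonnegative integer k there exists a constant C > 0 such that for all τ ∈ (0,1] and r ∈ [0,1]: |∂_τ^m ( 𝒥(τ,r)^{-k} )| ≤ C · τ^{-2k−m} · (1 + r^n/τ)^{-k}. -/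
/-!
The dust Jacobian is a product of two affine functions of `τ`, namely `τ` and
`q(τ) = τ + (2/3) (1 - τ) a` with `a = -r ∂ᵣ(log g)`. Since `q ≥ τ`, the logarithmic derivative of
each factor is `O(1/τ)` as long as `a` stays bounded, so every `τ`-derivative of an integer power of
`𝒥` costs at most a factor `1/τ` relative to that power itself. The lower bound
`𝒥 = τ q ≳ τ (τ + r^n)` then gives the estimate for the negative powers.
-/

section NormedField

variable {𝕜 : Type*} [NontriviallyNormedField 𝕜]

theorem iteratedDeriv_comp_mul_add {F : Type*} [NormedAddCommGroup F] [NormedSpace 𝕜 F]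
    (m : ℕ) (f : 𝕜 → F) (s b : 𝕜) :
    iteratedDeriv m (fun x => f (s * x + b)) =
      fun x => s ^ m • iteratedDeriv m f (s * x + b) := by
  induction m with
  | zero => simp
  | succ m ih =>
    funext x
    rw [iteratedDeriv_succ, ih, deriv_fun_const_smul_field,
      deriv_comp_mul_left s (fun y => iteratedDeriv m f (y + b)), deriv_comp_add_const,
      ← iteratedDeriv_succ, smul_smul, pow_succ]

theorem iteratedDeriv_affine_zpow (m : ℕ) (z : ℤ) (s b x : 𝕜) :
    iteratedDeriv m (fun x => (s * x + b) ^ z) x =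
      s ^ m * ((∏ i ∈ Finset.range m, ((z : 𝕜) - i)) * (s * x + b) ^ (z - m)) := by
  simp only [iteratedDeriv_comp_mul_add m (· ^ z), iteratedDeriv_eq_iterate, iter_deriv_zpow,
    smul_eq_mul]

theorem norm_iteratedDeriv_affine_zpow_le (m : ℕ) (z : ℤ) {s b x : 𝕜} {A : ℝ} (hx : x ≠ 0)
    (hq : s * x + b ≠ 0) (hA : ‖s * x‖ ≤ A * ‖s * x + b‖) :
    ‖iteratedDeriv m (fun x => (s * x + b) ^ z) x‖ ≤
      ‖∏ i ∈ Finset.range m, ((z : 𝕜) - i)‖ * A ^ m * (‖x‖ ^ m)⁻¹ * ‖(s * x + b) ^ z‖ := by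
  have hx' : 0 < ‖x‖ := norm_pos_iff.2 hx
  have hq' : 0 < ‖s * x + b‖ := norm_pos_iff.2 hq
  have hlog : ‖s‖ / ‖s * x + b‖ ≤ A / ‖x‖ := by
    rwa [div_le_div_iff₀ hq' hx', ← norm_mul]
  calc ‖iteratedDeriv m (fun x => (s * x + b) ^ z) x‖
      = ‖∏ i ∈ Finset.range m, ((z : 𝕜) - i)‖ * (‖s‖ / ‖s * x + b‖) ^ m
          * ‖(s * x + b) ^ z‖ := by
        rw [iteratedDeriv_affine_zpow, zpow_sub₀ hq, zpow_natCast, norm_mul, norm_mul, norm_div,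
          norm_pow, norm_pow, div_pow]
        ring
    _ ≤ ‖∏ i ∈ Finset.range m, ((z : 𝕜) - i)‖ * (A / ‖x‖) ^ m * ‖(s * x + b) ^ z‖ := by
        gcongr
    _ = _ := by rw [div_pow]; ring

theorem norm_iteratedDeriv_mul_le_of_scaled_bounds {𝔸 : Type*} [NormedRing 𝔸] [NormedAlgebra 𝕜 𝔸]
    {m : ℕ} {f h : 𝕜 → 𝔸} {x : 𝕜} (hf : ContDiffAt 𝕜 m f x) (hh : ContDiffAt 𝕜 m h x)
    {a b : ℕ → ℝ} {ℓ u v : ℝ}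
    (hfa : ∀ i ≤ m, ‖iteratedDeriv i f x‖ ≤ a i * (ℓ ^ i)⁻¹ * u)
    (hhb : ∀ i ≤ m, ‖iteratedDeriv i h x‖ ≤ b i * (ℓ ^ i)⁻¹ * v) :
    ‖iteratedDeriv m (fun y => f y * h y) x‖ ≤
      (∑ i ∈ Finset.range (m + 1), m.choose i * a i * b (m - i)) * (ℓ ^ m)⁻¹ * (u * v) := by
  have hterm : ∀ i ∈ Finset.range (m + 1),
      ‖m.choose i * iteratedDeriv i f x * iteratedDeriv (m - i) h x‖ ≤
        m.choose i * a i * b (m - i) * (ℓ ^ m)⁻¹ * (u * v) := by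
    intro i hi
    have him : i ≤ m := Finset.mem_range_succ_iff.1 hi
    calc ‖m.choose i * iteratedDeriv i f x * iteratedDeriv (m - i) h x‖
        ≤ m.choose i * (‖iteratedDeriv i f x‖ * ‖iteratedDeriv (m - i) h x‖) := by
          rw [mul_assoc, ← nsmul_eq_mul]
          exact norm_nsmul_le.trans (by gcongr; exact norm_mul_le _ _)
      _ ≤ m.choose i * (a i * (ℓ ^ i)⁻¹ * u * (b (m - i) * (ℓ ^ (m - i))⁻¹ * v)) := by
          gcongr
          · exact (norm_nonneg _).trans (hfa i him)
          · exact hfa i him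
          · exact hhb (m - i) (Nat.sub_le m i)
      _ = m.choose i * a i * b (m - i) * (ℓ ^ m)⁻¹ * (u * v) := by
          rw [← pow_mul_pow_sub ℓ him, mul_inv]
          ring
  calc ‖iteratedDeriv m (fun y => f y * h y) x‖
      ≤ ∑ i ∈ Finset.range (m + 1),
          ‖m.choose i * iteratedDeriv i f x * iteratedDeriv (m - i) h x‖ := by
        rw [iteratedDeriv_fun_mul hf hh]
        exact norm_sum_le _ _
    _ ≤ _ := by
        rw [Finset.sum_mul, Finset.sum_mul]
        exact Finset.sum_le_sum hterm

theorem contDiffAt_affine_zpow {N : WithTop ℕ∞} (z : ℤ) {s b x : 𝕜} (hq : s * x + b ≠ 0) :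
    ContDiffAt 𝕜 N (fun x => (s * x + b) ^ z) x := by
  have haff : ContDiffAt 𝕜 N (fun x => s * x + b) x := by fun_prop
  cases z with
  | ofNat l => simpa only [Int.ofNat_eq_natCast, zpow_natCast] using haff.pow l
  | negSucc l => simpa only [zpow_negSucc] using (haff.pow (l + 1)).fun_inv (pow_ne_zero _ hq)

theorem exists_norm_iteratedDeriv_mul_affine_zpow_le (m : ℕ) (z w : ℤ) (A B : ℝ) :
    ∃ C : ℝ, ∀ s b p c x : 𝕜, x ≠ 0 → s * x + b ≠ 0 → p * x + c ≠ 0 →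
      ‖s * x‖ ≤ A * ‖s * x + b‖ → ‖p * x‖ ≤ B * ‖p * x + c‖ →
      ‖iteratedDeriv m (fun x => (s * x + b) ^ z * (p * x + c) ^ w) x‖ ≤
        C * (‖x‖ ^ m)⁻¹ * ‖(s * x + b) ^ z * (p * x + c) ^ w‖ := by
  let K (u : ℤ) (D : ℝ) (i : ℕ) : ℝ := ‖∏ j ∈ Finset.range i, ((u : 𝕜) - j)‖ * D ^ i
  refine ⟨∑ i ∈ Finset.range (m + 1), m.choose i * K z A i * K w B (m - i),
    fun s b p c x hx hsb hpc hA hB => ?_⟩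
  rw [norm_mul]
  exact norm_iteratedDeriv_mul_le_of_scaled_bounds (contDiffAt_affine_zpow z hsb)
    (contDiffAt_affine_zpow w hpc) (fun i _ => norm_iteratedDeriv_affine_zpow_le i z hx hsb hA)
    (fun i _ => norm_iteratedDeriv_affine_zpow_le i w hx hpc hB)

end NormedField

/-- The Jacobian `𝒥[φ₀](t, r)` of the dust profile, as a function of time and of the number
`a = -r ∂ᵣ(log g)`, through which alone it depends on `g` and `r`: `M_g(t, r) = (t - 1) (-a)`. -/
noncomputable def dustJacobian (a t : ℝ) : ℝ :=
  t ^ 2 + 2 / 3 * t * ((t - 1) * -a)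

theorem dustJacobian_eq_mul_affine (a t : ℝ) :
    dustJacobian a t = t * ((1 - 2 / 3 * a) * t + 2 / 3 * a) := by
  unfold dustJacobian
  ring

theorem le_dustJacobian_affine_factor {a t : ℝ} (ha : 0 ≤ a) (ht : t ≤ 1) :
    t ≤ (1 - 2 / 3 * a) * t + 2 / 3 * a := by
  linarith [mul_nonneg ha (sub_nonneg.2 ht)]

theorem le_dustJacobian {c a ρ t : ℝ} (hc : 0 < c) (hρ : 0 ≤ ρ) (hρ₁ : ρ ≤ 1) (ha : c * ρ ≤ a)
    (ht : 0 < t) (ht₁ : t ≤ 1) :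
    c / (2 * (1 + c)) * (t ^ 2 * (1 + ρ / t)) ≤ dustJacobian a t := by
  have hq := le_dustJacobian_affine_factor ((mul_nonneg hc.le hρ).trans ha) ht₁
  have hfactor : c * (t + ρ) ≤ 2 * (1 + c) * ((1 - 2 / 3 * a) * t + 2 / 3 * a) := by
    have haρ : c * ρ * (1 - t) ≤ a * (1 - t) := by gcongr
    have htρ : c * t * ρ ≤ c * t := mul_le_of_le_one_right (by positivity) hρ₁
    have hcq : c * t ≤ c * ((1 - 2 / 3 * a) * t + 2 / 3 * a) :=
      mul_le_mul_of_nonneg_left hq hc.le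
    linarith
  calc c / (2 * (1 + c)) * (t ^ 2 * (1 + ρ / t)) = t * (c * (t + ρ) / (2 * (1 + c))) := by
        field_simp
    _ ≤ t * ((1 - 2 / 3 * a) * t + 2 / 3 * a) := by
        gcongr
        rwa [div_le_iff₀' (by positivity)]
    _ = dustJacobian a t := (dustJacobian_eq_mul_affine a t).symm

theorem exists_abs_iteratedDeriv_dustJacobian_zpow_le (m : ℕ) (z : ℤ) (A : ℝ) :
    ∃ C : ℝ, ∀ a ∈ Set.Icc 0 A, ∀ τ ∈ Set.Ioc (0 : ℝ) 1,
      |iteratedDeriv m (fun t => dustJacobian a t ^ z) τ| ≤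
        C * (τ ^ m)⁻¹ * |dustJacobian a τ ^ z| := by
  obtain ⟨C, hC⟩ := exists_norm_iteratedDeriv_mul_affine_zpow_le (𝕜 := ℝ) m z z 1 (1 + A)
  refine ⟨C, fun a ⟨ha, haA⟩ τ ⟨hτ, hτ₁⟩ => ?_⟩
  have hq := le_dustJacobian_affine_factor ha hτ₁
  have hq_pos := hτ.trans_le hq
  have hlog : |(1 - 2 / 3 * a) * τ| ≤ (1 + A) * |(1 - 2 / 3 * a) * τ + 2 / 3 * a| := by
    rw [abs_mul, abs_of_pos hτ, abs_of_pos hq_pos]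
    gcongr
    · linarith
    · exact abs_le.2 ⟨by linarith, by linarith⟩
  simpa only [dustJacobian_eq_mul_affine, mul_zpow, one_mul, add_zero, Real.norm_eq_abs,
    abs_of_pos hτ] using
    hC 1 0 _ _ τ hτ.ne' (by simpa using hτ.ne') hq_pos.ne' (by simp) hlog

/-- Here `ρ` plays the role of `r ^ n` and `a` that of `-r ∂ᵣ(log g)`, so the constant depends on
`g` and `n` only through `c₁` and `c₂`. -/
theorem dust_jacobian_inverse_power_derivs_general {c₁ : ℝ} (hc₁ : 0 < c₁) (c₂ : ℝ) (m k : ℕ) :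
    ∃ C : ℝ, 0 < C ∧ ∀ ρ ∈ Set.Icc (0 : ℝ) 1, ∀ a ∈ Set.Icc (c₁ * ρ) (c₂ * ρ),
      ∀ τ ∈ Set.Ioc (0 : ℝ) 1,
        |iteratedDeriv m (fun t => (dustJacobian a t ^ k)⁻¹) τ| ≤
          C / (τ ^ (2 * k + m) * (1 + ρ / τ) ^ k) := by
  obtain ⟨C, hC⟩ := exists_abs_iteratedDeriv_dustJacobian_zpow_le m (-k) |c₂|
  simp only [zpow_neg, zpow_natCast] at hC
  set κ := c₁ / (2 * (1 + c₁))
  have hκ : 0 < κ := by positivity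
  refine ⟨max C 1 * (κ ^ k)⁻¹, mul_pos (by positivity) (inv_pos.2 (pow_pos hκ k)),
    fun ρ ⟨hρ, hρ₁⟩ a ⟨hac₁, hac₂⟩ τ ⟨hτ, hτ₁⟩ => ?_⟩
  have ha : 0 ≤ a := (mul_nonneg hc₁.le hρ).trans hac₁
  have haA : a ≤ |c₂| := calc
    a ≤ |c₂| * ρ := hac₂.trans (by gcongr; exact le_abs_self c₂)
    _ ≤ |c₂| := mul_le_of_le_one_right (abs_nonneg c₂) hρ₁
  have hJ : κ * (τ ^ 2 * (1 + ρ / τ)) ≤ dustJacobian a τ := le_dustJacobian hc₁ hρ hρ₁ hac₁ hτ hτ₁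
  have hJ_pos : 0 < dustJacobian a τ := lt_of_lt_of_le (by positivity) hJ
  calc |iteratedDeriv m (fun t => (dustJacobian a t ^ k)⁻¹) τ|
      ≤ C * (τ ^ m)⁻¹ * |(dustJacobian a τ ^ k)⁻¹| := hC a ⟨ha, haA⟩ τ ⟨hτ, hτ₁⟩
    _ = C * (τ ^ m)⁻¹ * (dustJacobian a τ ^ k)⁻¹ := by rw [abs_of_pos (by positivity)]
    _ ≤ max C 1 * (τ ^ m)⁻¹ * ((κ * (τ ^ 2 * (1 + ρ / τ))) ^ k)⁻¹ := by
        gcongr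
        exact le_max_left C 1
    _ = max C 1 * (κ ^ k)⁻¹ / (τ ^ (2 * k + m) * (1 + ρ / τ) ^ k) := by
        rw [mul_pow, mul_pow, ← pow_mul, pow_add, div_eq_mul_inv]
        simp only [mul_inv]
        ring

/-- Estimate (2.104) of Lemma 2.10: τ-derivatives of negative powers of the dust
Jacobian satisfy `|∂_τ^m (𝒥^{-k})| ≲ τ^{-2k-m} (1 + r^n/τ)^{-k}`. -/
theorem dust_jacobian_inverse_power_derivs (n : ℕ) (hn : 0 < n) (c₁ c₂ : ℝ)
    (hc₁ : 0 < c₁) (hc₂ : 0 < c₂) (g g' : ℝ → ℝ)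
    (hg_pos : ∀ r ∈ Set.Icc (0:ℝ) 1, 0 < g r)
    (hg_deriv : ∀ r ∈ Set.Icc (0:ℝ) 1, HasDerivWithinAt g (g' r) (Set.Icc 0 1) r)
    (hg'_cont : ContinuousOn g' (Set.Icc 0 1))
    (hbound : ∀ r ∈ Set.Icc (0:ℝ) 1,
      c₁ * r ^ n ≤ -(r * g' r / g r) ∧ -(r * g' r / g r) ≤ c₂ * r ^ n)
    (Mg J : ℝ → ℝ → ℝ)
    (hMg : ∀ τ r : ℝ, Mg τ r = (τ - 1) * r * g' r / g r)
    (hJ : ∀ τ r : ℝ, J τ r = τ ^ 2 + (2/3) * τ * Mg τ r)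
    (m k : ℕ) :
    ∃ C : ℝ, 0 < C ∧ ∀ τ ∈ Set.Ioc (0:ℝ) 1, ∀ r ∈ Set.Icc (0:ℝ) 1,
      |iteratedDeriv m (fun t => ((J t r) ^ k)⁻¹) τ| ≤
        C / (τ ^ (2 * k + m) * (1 + r ^ n / τ) ^ k) := by
  obtain ⟨C, hC, hbd⟩ := dust_jacobian_inverse_power_derivs_general hc₁ c₂ m k
  have hJ_eq (t r : ℝ) : J t r = dustJacobian (-(r * g' r / g r)) t := by
    rw [hJ, hMg, dustJacobian]
    ring
  simp only [hJ_eq]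
  exact ⟨C, hC, fun τ hτ r hr =>
    hbd (r ^ n) ⟨pow_nonneg hr.1 n, pow_le_one₀ hr.1 hr.2⟩ _ (hbound r hr) τ hτ⟩
end

section
/- Let n and K be positive integers, and let g : (0,1] → (0,∞) be smooth such that for every 1 ≤ j ≤ K+1 there is a constant C_j with |((r·d/dr)^j (log g))(r)| ≤ C_j r^n for all r ∈ (0,1]. Define M_g(τ,r) = (τ − 1)·r·g'(r)/g(r) and 𝒥(τ,r) = τ² + (2/3)·τ·M_g(τ,r). Then for all integers 0 ≤ m, ℓ ≤ K there exists C > 0 such that for all τ ∈ (0,1] and r ∈ (0,1]: |∂_τ^m 𝒥(τ,r)| ≤ C · τ² · r^{-nm} · (1 + r^n/τ)^{m+1}, and if ℓ ≥ 1 then |∂_τ^m ((r·∂_r)^ℓ 𝒥)(τ,r)| ≤ C · τ² · r^{-nm} · (1 + r^n/τ)^{m} · (r^n/τ), where (r·∂_r)^ℓ denotes ℓ iterations of the operator f ↦ r·∂_r f acting in the r-variable. -/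
/-- The radial scaling vector field `(r·d/dr) f (r) = r * f'(r)`. -/
noncomputable def rad : (ℝ → ℝ) → ℝ → ℝ := fun f r => r * deriv f r

/-!
Since `∂_τ` costs `τ⁻¹` on each monomial in `τ`, and `τ⁻¹ ≤ τ⁻¹ + x⁻¹ = (1 + x / τ) / x` with
`x = r ^ n`, it is enough to bound `τ ^ m ∂_τ^m` of each term of
`𝒥 = τ² + (2/3) (τ² - τ) (r∂_r)(log g)` on `(0, 1]`. There `τ²` gives `τ²`, while `τ² - τ` times
a coefficient of size `x` gives `τ x = τ² (x / τ)`. Applying `r∂_r` kills the first term and keeps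
the shape of the second.
-/

open scoped Nat Topology

lemma rad_congr {f h : ℝ → ℝ} {r : ℝ} (hfh : f =ᶠ[𝓝 r] h) : rad f =ᶠ[𝓝 r] rad h := by
  filter_upwards [hfh.deriv] with x hx
  simp only [rad, hx]

lemma rad_iterate_congr {f h : ℝ → ℝ} {r : ℝ} (hfh : f =ᶠ[𝓝 r] h) (k : ℕ) :
    rad^[k] f =ᶠ[𝓝 r] rad^[k] h := by
  induction k with
  | zero => exact hfh
  | succ k ih =>
    simp only [Function.iterate_succ_apply']
    exact rad_congr ih

lemma rad_const_add (a : ℝ) (f : ℝ → ℝ) : rad (fun x => a + f x) = rad f := by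
  funext x
  simp only [rad, deriv_const_add]

lemma rad_const_mul (c : ℝ) (f : ℝ → ℝ) : rad (fun x => c * f x) = fun x => c * rad f x := by
  funext x
  simp only [rad, deriv_const_mul_field, mul_left_comm]

lemma rad_iterate_const_mul (c : ℝ) (f : ℝ → ℝ) (k : ℕ) :
    rad^[k] (fun x => c * f x) = fun x => c * rad^[k] f x :=
  have hcomm : Function.Commute rad (fun f x => c * f x) := rad_const_mul c
  hcomm.iterate_left k f

lemma rad_iterate_succ_const_add_mul (a c : ℝ) (f : ℝ → ℝ) (k : ℕ) :
    rad^[k + 1] (fun x => a + c * f x) = fun x => c * rad^[k + 1] f x := by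
  rw [Function.iterate_succ_apply, rad_const_add, ← Function.iterate_succ_apply,
    rad_iterate_const_mul]

lemma rad_log_eventuallyEq {g : ℝ → ℝ} {r : ℝ} (hpos : 0 < g r) (hg : ContDiffAt ℝ 1 g r) :
    rad (fun x => Real.log (g x)) =ᶠ[𝓝 r] fun x => x * deriv g x / g x := by
  filter_upwards [hg.eventually (by simp), hg.continuousAt.eventually (lt_mem_nhds hpos)]
    with x hx hgx
  rw [rad, deriv.log (hx.differentiableAt one_ne_zero) hgx.ne', mul_div_assoc]

lemma abs_iteratedDeriv_pow_mul_pow_le (k m : ℕ) (τ : ℝ) :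
    |iteratedDeriv m (fun t : ℝ => t ^ k) τ| * |τ| ^ m ≤ k ! * |τ| ^ k := by
  rw [iteratedDeriv_pow]
  rcases le_or_gt m k with hmk | hkm
  · have hcoeff : k.descFactorial m ≤ k ! :=
      Nat.factorial_mul_descFactorial hmk ▸ Nat.le_mul_of_pos_left _ (Nat.factorial_pos _)
    calc |(k.descFactorial m : ℝ) * τ ^ (k - m)| * |τ| ^ m
        = k.descFactorial m * |τ| ^ k := by
          rw [abs_mul, Nat.abs_cast, abs_pow, mul_assoc, ← pow_add, Nat.sub_add_cancel hmk]
      _ ≤ k ! * |τ| ^ k := by gcongr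
  · rw [Nat.descFactorial_of_lt hkm, Nat.cast_zero, zero_mul, abs_zero, zero_mul]
    positivity

lemma abs_iteratedDeriv_sq_mul_pow_le {τ : ℝ} (hτ : 0 ≤ τ) (m : ℕ) :
    |iteratedDeriv m (fun t : ℝ => t ^ 2) τ| * τ ^ m ≤ 2 * τ ^ 2 := by
  simpa [abs_of_nonneg hτ] using abs_iteratedDeriv_pow_mul_pow_le 2 m τ

lemma abs_iteratedDeriv_sq_sub_self_mul_pow_le {τ : ℝ} (hτ : 0 ≤ τ) (hτ1 : τ ≤ 1) (m : ℕ) :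
    |iteratedDeriv m (fun t : ℝ => t ^ 2 - t) τ| * τ ^ m ≤ 3 * τ := by
  have hlin : |iteratedDeriv m (fun t : ℝ => t) τ| * τ ^ m ≤ τ := by
    simpa [abs_of_nonneg hτ] using abs_iteratedDeriv_pow_mul_pow_le 1 m τ
  rw [iteratedDeriv_fun_sub (by fun_prop) (by fun_prop)]
  calc |iteratedDeriv m (fun t : ℝ => t ^ 2) τ - iteratedDeriv m (fun t : ℝ => t) τ| * τ ^ m
      ≤ (|iteratedDeriv m (fun t : ℝ => t ^ 2) τ| + |iteratedDeriv m (fun t : ℝ => t) τ|)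
          * τ ^ m := by gcongr; exact abs_sub _ _
    _ ≤ 2 * τ ^ 2 + τ := by
      rw [add_mul]
      exact add_le_add (abs_iteratedDeriv_sq_mul_pow_le hτ m) hlin
    _ ≤ 3 * τ := by linarith [pow_le_of_le_one hτ hτ1 two_ne_zero]

lemma le_mul_one_add_div_pow_div_pow {D B x τ : ℝ} {m : ℕ} (hx : 0 < x) (hτ : 0 < τ) (hB : 0 ≤ B)
    (hD : D * τ ^ m ≤ B) : D ≤ B * (1 + x / τ) ^ m / x ^ m := by
  have hinv : 1 / τ ≤ (1 + x / τ) / x := by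
    rw [add_div, div_div_cancel_left' hx.ne', inv_eq_one_div]
    exact le_add_of_nonneg_left (by positivity)
  calc D ≤ B * (1 / τ) ^ m := by
        rwa [one_div_pow, mul_one_div, le_div_iff₀ (pow_pos hτ m)]
    _ ≤ B * ((1 + x / τ) / x) ^ m := by gcongr
    _ = B * (1 + x / τ) ^ m / x ^ m := by rw [div_pow, mul_div_assoc]

section DustJacobian

variable {a b x τ : ℝ} (ha : |a| ≤ b * x) (hτ : 0 < τ) (hτ1 : τ ≤ 1) (m : ℕ)
include ha hτ hτ1

lemma abs_iteratedDeriv_const_mul_sq_sub_self_mul_pow_le :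
    |iteratedDeriv m (fun t : ℝ => a * (t ^ 2 - t)) τ| * τ ^ m ≤ 3 * b * τ ^ 2 * (x / τ) := by
  rw [iteratedDeriv_const_mul_field, abs_mul, mul_assoc]
  calc |a| * (|iteratedDeriv m (fun t : ℝ => t ^ 2 - t) τ| * τ ^ m)
      ≤ (b * x) * (3 * τ) :=
        mul_le_mul ha (abs_iteratedDeriv_sq_sub_self_mul_pow_le hτ.le hτ1 m) (by positivity)
          ((abs_nonneg a).trans ha)
    _ = 3 * b * τ ^ 2 * (x / τ) := by field_simp

lemma abs_iteratedDeriv_const_mul_sq_sub_self_le (hx : 0 < x) :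
    |iteratedDeriv m (fun t : ℝ => a * (t ^ 2 - t)) τ| ≤
      3 * b * τ ^ 2 * (1 + x / τ) ^ m * (x / τ) / x ^ m := by
  have hb : 0 ≤ b := nonneg_of_mul_nonneg_left ((abs_nonneg a).trans ha) hx
  rw [mul_right_comm _ _ (x / τ)]
  exact le_mul_one_add_div_pow_div_pow hx hτ (by positivity)
    (abs_iteratedDeriv_const_mul_sq_sub_self_mul_pow_le ha hτ hτ1 m)

lemma abs_iteratedDeriv_sq_add_const_mul_sq_sub_self_le (hx : 0 < x) :
    |iteratedDeriv m (fun t : ℝ => t ^ 2 + a * (t ^ 2 - t)) τ| ≤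
      (2 + 3 * b) * τ ^ 2 * (1 + x / τ) ^ (m + 1) / x ^ m := by
  have hb : 0 ≤ b := nonneg_of_mul_nonneg_left ((abs_nonneg a).trans ha) hx
  rw [pow_succ' (1 + x / τ), ← mul_assoc]
  refine le_mul_one_add_div_pow_div_pow hx hτ (by positivity) ?_
  rw [iteratedDeriv_fun_add (by fun_prop) (by fun_prop)]
  calc |iteratedDeriv m (fun t : ℝ => t ^ 2) τ
          + iteratedDeriv m (fun t : ℝ => a * (t ^ 2 - t)) τ| * τ ^ m
      ≤ (|iteratedDeriv m (fun t : ℝ => t ^ 2) τ|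
          + |iteratedDeriv m (fun t : ℝ => a * (t ^ 2 - t)) τ|) * τ ^ m := by
        gcongr; exact abs_add_le _ _
    _ ≤ 2 * τ ^ 2 + 3 * b * τ ^ 2 * (x / τ) := by
      rw [add_mul]
      exact add_le_add (abs_iteratedDeriv_sq_mul_pow_le hτ.le m)
        (abs_iteratedDeriv_const_mul_sq_sub_self_mul_pow_le ha hτ hτ1 m)
    _ ≤ (2 + 3 * b) * τ ^ 2 * (1 + x / τ) := by
      linarith [show 0 ≤ 2 * τ ^ 2 * (x / τ) + 3 * b * τ ^ 2 by positivity]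

end DustJacobian

theorem dust_jacobian_mixed_derivs_general {g : ℝ → ℝ} {r x c : ℝ} {ℓ : ℕ} (hg_pos : 0 < g r)
    (hg_smooth : ContDiffAt ℝ (ℓ + 1) g r) (hx : 0 < x)
    (hc : |rad^[ℓ + 1] (fun ρ => Real.log (g ρ)) r| ≤ c * x) {Mg J : ℝ → ℝ → ℝ}
    (hMg : ∀ τ r : ℝ, Mg τ r = (τ - 1) * r * deriv g r / g r)
    (hJ : ∀ τ r : ℝ, J τ r = τ ^ 2 + (2 / 3) * τ * Mg τ r)
    {τ : ℝ} (hτ : 0 < τ) (hτ1 : τ ≤ 1) (m : ℕ) :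
    (ℓ = 0 → |iteratedDeriv m (fun t => J t r) τ| ≤
      (2 + 2 * c) * τ ^ 2 * (1 + x / τ) ^ (m + 1) / x ^ m) ∧
    (1 ≤ ℓ → |iteratedDeriv m (fun t => rad^[ℓ] (fun ρ => J t ρ) r) τ| ≤
      (2 + 2 * c) * τ ^ 2 * (1 + x / τ) ^ m * (x / τ) / x ^ m) := by
  have hJ_rad : ∀ t, (fun ρ => J t ρ) =ᶠ[𝓝 r]
      fun ρ => t ^ 2 + 2 / 3 * (t ^ 2 - t) * rad (fun ρ => Real.log (g ρ)) ρ := fun t => by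
    filter_upwards [rad_log_eventuallyEq hg_pos (hg_smooth.of_le (by simp))] with ρ hρ
    rw [hJ, hMg, hρ]
    ring
  have ha : |2 / 3 * rad^[ℓ + 1] (fun ρ => Real.log (g ρ)) r| ≤ 2 / 3 * c * x := by
    rw [abs_mul, abs_of_pos (by norm_num : (0 : ℝ) < 2 / 3), mul_assoc]
    gcongr
  constructor
  · rintro rfl
    have hJ_eq : (fun t => J t r) = fun t =>
        t ^ 2 + 2 / 3 * rad^[1] (fun ρ => Real.log (g ρ)) r * (t ^ 2 - t) := by
      funext t
      rw [(hJ_rad t).eq_of_nhds, Function.iterate_one, mul_right_comm]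
    rw [hJ_eq, show 2 * c = 3 * (2 / 3 * c) by ring]
    exact abs_iteratedDeriv_sq_add_const_mul_sq_sub_self_le ha hτ hτ1 m hx
  · intro hℓ
    obtain ⟨k, rfl⟩ := Nat.exists_eq_add_of_le' hℓ
    have hJ_eq : (fun t => rad^[k + 1] (fun ρ => J t ρ) r) = fun t =>
        2 / 3 * rad^[k + 1 + 1] (fun ρ => Real.log (g ρ)) r * (t ^ 2 - t) := by
      funext t
      rw [(rad_iterate_congr (hJ_rad t) (k + 1)).eq_of_nhds, rad_iterate_succ_const_add_mul,
        ← Function.iterate_succ_apply, mul_right_comm]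
    rw [hJ_eq]
    refine (abs_iteratedDeriv_const_mul_sq_sub_self_le ha hτ hτ1 m hx).trans ?_
    gcongr
    linarith

/-- Estimate (2.102) of Lemma 2.10: mixed τ- and scaling-derivatives of the dust
Jacobian `𝒥(τ,r) = τ² + (2/3) τ M_g(τ,r)` satisfy
`|∂_τ^m 𝒥| ≲ τ² r^{-nm} (1 + r^n/τ)^{m+1}` and, for `ℓ ≥ 1`,
`|∂_τ^m (r∂_r)^ℓ 𝒥| ≲ τ² r^{-nm} (1 + r^n/τ)^m (r^n/τ)`. -/
theorem dust_jacobian_mixed_derivs (n K : ℕ) (hn : 0 < n) (hK : 0 < K) (g : ℝ → ℝ)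
    (hg_pos : ∀ r ∈ Set.Ioc (0:ℝ) 1, 0 < g r)
    (hg_smooth : ∀ r ∈ Set.Ioc (0:ℝ) 1, ContDiffAt ℝ (⊤ : ℕ∞) g r)
    (C : ℕ → ℝ)
    (hC : ∀ j, 1 ≤ j → j ≤ K + 1 → 0 < C j ∧
      ∀ r ∈ Set.Ioc (0:ℝ) 1, |rad^[j] (fun x => Real.log (g x)) r| ≤ C j * r ^ n)
    (Mg J : ℝ → ℝ → ℝ)
    (hMg : ∀ τ r : ℝ, Mg τ r = (τ - 1) * r * deriv g r / g r)
    (hJ : ∀ τ r : ℝ, J τ r = τ ^ 2 + (2/3) * τ * Mg τ r) :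
    ∀ m ℓ : ℕ, m ≤ K → ℓ ≤ K →
      ∃ C' : ℝ, 0 < C' ∧ ∀ τ ∈ Set.Ioc (0:ℝ) 1, ∀ r ∈ Set.Ioc (0:ℝ) 1,
        (ℓ = 0 → |iteratedDeriv m (fun t => J t r) τ| ≤
          C' * τ ^ 2 * (1 + r ^ n / τ) ^ (m + 1) / r ^ (n * m)) ∧
        (1 ≤ ℓ → |iteratedDeriv m (fun t => rad^[ℓ] (fun ρ => J t ρ) r) τ| ≤
          C' * τ ^ 2 * (1 + r ^ n / τ) ^ m * (r ^ n / τ) / r ^ (n * m)) := by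
  intro m ℓ _ hℓ
  obtain ⟨hCpos, hClog⟩ := hC (ℓ + 1) (by omega) (by omega)
  exact ⟨2 + 2 * C (ℓ + 1), by positivity, fun τ hτ r hr => pow_mul r n m ▸
    dust_jacobian_mixed_derivs_general (hg_pos r hr) ((hg_smooth r hr).of_le (mod_cast le_top))
      (pow_pos hr.1 n) (hClog r hr) hMg hJ hτ.1 hτ.2 m⟩
end

section
/- Let χ : [0,1] → [0,∞) be a smooth cutoff function with χ = 1 on [0,1/2], χ = 0 on [3/4,1], and χ' ≤ 0 on [0,1]. Then there exists a constant C > 0, depending only on χ, such that for every continuously differentiable u : [0,1] → ℝ and for A being either Au = u' or Au = u' + (2/r)u: ∫_0^{3/4} u(r)² χ(r)² dr ≤ C · ( ∫_{1/2}^{3/4} u(r)² r² dr + ∫_0^{3/4} (Au)(r)² r² χ(r)² dr ). -/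
/-!
Let `A u = u' + (κ / r) u` and `w = r A u = r u' + κ u`. Since `χ b = 0`, integrating the derivative
of `r |u|² χ²` over `[0, b]` leaves no boundary terms and gives
`(2κ - 1) ∫ |u|² χ² = 2 ∫ ⟨u, w⟩ χ² + 2 ∫ r |u|² χ χ'`.
For `κ ≠ 1/2` the first term on the right is absorbed by Young's inequality. In the second term `χ'`
vanishes on `[0, a]`, where the cutoff is constant, and on `[a, b]` the weights `r` and `r²` are
comparable. The two operators `∂_r` and `D_r` are the cases `κ = 0` and `κ = 2`.
-/

open Set intervalIntegral
open scoped RealInnerProductSpace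

theorem derivWithin_eq_zero_of_eqOn_const {𝕜 F : Type*} [NontriviallyNormedField 𝕜]
    [NormedAddCommGroup F] [NormedSpace 𝕜 F] {f : 𝕜 → F} {s t : Set 𝕜} {x : 𝕜} {c : F}
    (hst : s ⊆ t) (hs : UniqueDiffWithinAt 𝕜 s x) (hx : x ∈ s)
    (hf : DifferentiableWithinAt 𝕜 f t x) (hc : EqOn f (fun _ => c) s) :
    derivWithin f t x = 0 := by
  rw [← derivWithin_subset hst hs hf, derivWithin_congr hc (hc hx), derivWithin_fun_const,
    Pi.zero_apply]

theorem abs_integral_id_mul_mul_le_of_eqOn_zero {g φ : ℝ → ℝ} {a b M : ℝ} (ha : 0 < a)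
    (hab : a ≤ b) (hg : ContinuousOn g (Icc 0 b)) (hg_nonneg : ∀ r ∈ Icc a b, 0 ≤ g r)
    (hφ : ContinuousOn φ (Icc 0 b)) (hφ_zero : EqOn φ 0 (Icc 0 a))
    (hφ_le : ∀ r ∈ Icc a b, |φ r| ≤ M) :
    |∫ r in (0 : ℝ)..b, r * g r * φ r| ≤ M / a * ∫ r in a..b, g r * r ^ 2 := by
  have h_left : Icc 0 a ⊆ Icc 0 b := Icc_subset_Icc_right hab
  have h_right : Icc a b ⊆ Icc 0 b := Icc_subset_Icc_left ha.le
  have h_cont : ContinuousOn (fun r => r * g r * φ r) (Icc 0 b) := by fun_prop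
  have h_zero : ∫ r in (0 : ℝ)..a, r * g r * φ r = 0 := by
    refine (integral_congr fun r hr => ?_).trans integral_zero
    rw [uIcc_of_le ha.le] at hr
    simp [hφ_zero hr]
  rw [← integral_add_adjacent_intervals ((h_cont.mono h_left).intervalIntegrable_of_Icc ha.le)
    ((h_cont.mono h_right).intervalIntegrable_of_Icc hab), h_zero, zero_add,
    ← integral_const_mul, ← Real.norm_eq_abs]
  refine norm_integral_le_of_norm_le hab (.of_forall fun r hr => ?_)
    (ContinuousOn.intervalIntegrable_of_Icc hab (by have := hg.mono h_right; fun_prop))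
  have hr_Icc := Ioc_subset_Icc_self hr
  have hg_r := hg_nonneg r hr_Icc
  have hr_pos : 0 < r := ha.trans hr.1
  have hr_le : r ≤ r ^ 2 / a := by
    rw [le_div_iff₀ ha, sq]
    gcongr
    exact hr.1.le
  calc ‖r * g r * φ r‖ = r * g r * |φ r| := by
        rw [Real.norm_eq_abs, abs_mul, abs_of_nonneg (by positivity)]
    _ ≤ r ^ 2 / a * g r * M := by
        gcongr
        exact hφ_le r hr_Icc
    _ = M / a * (g r * r ^ 2) := by ring

section InnerProductSpace

variable {E : Type*} [NormedAddCommGroup E] [InnerProductSpace ℝ E]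

theorem hasDerivAt_id_mul_norm_sq_mul_sq {u : ℝ → E} {u' : E} {χ : ℝ → ℝ} {χ' r : ℝ} (κ : ℝ)
    (hu : HasDerivAt u u' r) (hχ : HasDerivAt χ χ' r) :
    HasDerivAt (fun r => r * ‖u r‖ ^ 2 * χ r ^ 2)
      (2 * (⟪u r, r • u' + κ • u r⟫ * χ r ^ 2) + 2 * (r * ‖u r‖ ^ 2 * (χ r * χ')) -
        (2 * κ - 1) * (‖u r‖ ^ 2 * χ r ^ 2)) r := by
  refine (((hasDerivAt_id' r).fun_mul hu.norm_sq).fun_mul (hχ.fun_pow 2)).congr_deriv ?_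
  rw [inner_add_right, real_inner_smul_right, real_inner_smul_right, real_inner_self_eq_norm_sq]
  push_cast
  ring

theorem integral_norm_add_div_smul_sq_mul_sq (u u' : ℝ → E) (χ : ℝ → ℝ) (κ a b : ℝ) :
    ∫ r in a..b, ‖u' r + (κ / r) • u r‖ ^ 2 * r ^ 2 * χ r ^ 2 =
      ∫ r in a..b, ‖r • u' r + κ • u r‖ ^ 2 * χ r ^ 2 := by
  refine integral_congr_ae ?_
  filter_upwards [MeasureTheory.Measure.ae_ne MeasureTheory.volume (0 : ℝ)] with r hr _
  have h_smul : r • u' r + κ • u r = r • (u' r + (κ / r) • u r) := by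
    rw [smul_add, smul_smul, mul_div_cancel₀ κ hr]
  rw [h_smul, norm_smul, mul_pow, Real.norm_eq_abs, sq_abs, mul_comm (r ^ 2)]

theorem two_mul_abs_integral_inner_mul_sq_le {v w : ℝ → E} {χ : ℝ → ℝ} {a b ε : ℝ}
    (hab : a ≤ b) (hε : 0 < ε) (hv : ContinuousOn v (Icc a b)) (hw : ContinuousOn w (Icc a b))
    (hχ : ContinuousOn χ (Icc a b)) :
    2 * |∫ r in a..b, ⟪v r, w r⟫ * χ r ^ 2| ≤
      ε * (∫ r in a..b, ‖v r‖ ^ 2 * χ r ^ 2) + ε⁻¹ * ∫ r in a..b, ‖w r‖ ^ 2 * χ r ^ 2 := by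
  have integrable {f : ℝ → ℝ} (hf : ContinuousOn f (Icc a b)) :
      IntervalIntegrable f MeasureTheory.volume a b := hf.intervalIntegrable_of_Icc hab
  have h_young (r : ℝ) : 2 * |⟪v r, w r⟫| ≤ ε * ‖v r‖ ^ 2 + ε⁻¹ * ‖w r‖ ^ 2 := by
    linarith [abs_real_inner_le_norm (v r) (w r),
      two_mul_le_add_mul_sq (a := ‖v r‖) (b := ‖w r‖) hε]
  calc 2 * |∫ r in a..b, ⟪v r, w r⟫ * χ r ^ 2|
      ≤ 2 * ∫ r in a..b, |⟪v r, w r⟫ * χ r ^ 2| := by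
        gcongr
        exact abs_integral_le_integral_abs hab
    _ = ∫ r in a..b, 2 * |⟪v r, w r⟫ * χ r ^ 2| := (integral_const_mul _ _).symm
    _ ≤ ∫ r in a..b, (ε * (‖v r‖ ^ 2 * χ r ^ 2) + ε⁻¹ * (‖w r‖ ^ 2 * χ r ^ 2)) := by
        refine integral_mono_on hab (integrable (by fun_prop)) (integrable (by fun_prop))
          fun r _ => ?_
        rw [abs_mul, abs_of_nonneg (sq_nonneg (χ r))]
        linarith [mul_le_mul_of_nonneg_right (h_young r) (sq_nonneg (χ r))]
    _ = _ := by
        rw [integral_add (integrable (by fun_prop)) (integrable (by fun_prop)),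
          integral_const_mul, integral_const_mul]

section Cutoff

variable {u u' : ℝ → E} {χ χ' : ℝ → ℝ} {b : ℝ}

theorem mul_integral_norm_sq_mul_cutoff_sq_eq (κ : ℝ) (hb : 0 ≤ b)
    (hu : ∀ r ∈ Icc 0 b, HasDerivWithinAt u (u' r) (Icc 0 b) r) (hu' : ContinuousOn u' (Icc 0 b))
    (hχ : ∀ r ∈ Icc 0 b, HasDerivWithinAt χ (χ' r) (Icc 0 b) r) (hχ' : ContinuousOn χ' (Icc 0 b))
    (hχ_b : χ b = 0) :
    (2 * κ - 1) * ∫ r in (0 : ℝ)..b, ‖u r‖ ^ 2 * χ r ^ 2 =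
      2 * (∫ r in (0 : ℝ)..b, ⟪u r, r • u' r + κ • u r⟫ * χ r ^ 2) +
        2 * ∫ r in (0 : ℝ)..b, r * ‖u r‖ ^ 2 * (χ r * χ' r) := by
  have hu_cont : ContinuousOn u (Icc 0 b) := HasDerivWithinAt.continuousOn hu
  have hχ_cont : ContinuousOn χ (Icc 0 b) := HasDerivWithinAt.continuousOn hχ
  have integrable {f : ℝ → ℝ} (hf : ContinuousOn f (Icc 0 b)) :
      IntervalIntegrable f MeasureTheory.volume 0 b := hf.intervalIntegrable_of_Icc hb
  have h_ftc := integral_eq_sub_of_hasDerivAt_of_le hb (by fun_prop)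
    (fun r hr =>
      have h_nhds := Icc_mem_nhds hr.1 hr.2
      hasDerivAt_id_mul_norm_sq_mul_sq κ ((hu r (Ioo_subset_Icc_self hr)).hasDerivAt h_nhds)
        ((hχ r (Ioo_subset_Icc_self hr)).hasDerivAt h_nhds))
    (integrable (by fun_prop))
  rw [integral_sub (integrable (by fun_prop)) (integrable (by fun_prop)),
    integral_add (integrable (by fun_prop)) (integrable (by fun_prop)), integral_const_mul,
    integral_const_mul, integral_const_mul, hχ_b] at h_ftc
  linarith

theorem integral_norm_sq_mul_cutoff_sq_le {κ δ : ℝ} (hb : 0 ≤ b) (hδ : 0 < δ)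
    (hκ : δ ≤ |2 * κ - 1|)
    (hu : ∀ r ∈ Icc 0 b, HasDerivWithinAt u (u' r) (Icc 0 b) r) (hu' : ContinuousOn u' (Icc 0 b))
    (hχ : ∀ r ∈ Icc 0 b, HasDerivWithinAt χ (χ' r) (Icc 0 b) r) (hχ' : ContinuousOn χ' (Icc 0 b))
    (hχ_b : χ b = 0) :
    ∫ r in (0 : ℝ)..b, ‖u r‖ ^ 2 * χ r ^ 2 ≤
      4 / δ * |∫ r in (0 : ℝ)..b, r * ‖u r‖ ^ 2 * (χ r * χ' r)| +
        4 / δ ^ 2 * ∫ r in (0 : ℝ)..b, ‖r • u' r + κ • u r‖ ^ 2 * χ r ^ 2 := by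
  have hu_cont : ContinuousOn u (Icc 0 b) := HasDerivWithinAt.continuousOn hu
  have h_identity := mul_integral_norm_sq_mul_cutoff_sq_eq κ hb hu hu' hχ hχ' hχ_b
  have h_absorb := two_mul_abs_integral_inner_mul_sq_le (w := fun r => r • u' r + κ • u r) hb
    (half_pos hδ) hu_cont (by fun_prop) (HasDerivWithinAt.continuousOn hχ)
  have h_nonneg : 0 ≤ ∫ r in (0 : ℝ)..b, ‖u r‖ ^ 2 * χ r ^ 2 :=
    integral_nonneg hb fun r _ => by positivity
  set U := ∫ r in (0 : ℝ)..b, ‖u r‖ ^ 2 * χ r ^ 2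
  set I := ∫ r in (0 : ℝ)..b, ⟪u r, r • u' r + κ • u r⟫ * χ r ^ 2
  set J := ∫ r in (0 : ℝ)..b, r * ‖u r‖ ^ 2 * (χ r * χ' r)
  set W := ∫ r in (0 : ℝ)..b, ‖r • u' r + κ • u r‖ ^ 2 * χ r ^ 2
  have h_lower : δ * U ≤ 2 * |I| + 2 * |J| :=
    calc δ * U ≤ |2 * κ - 1| * U := by gcongr
      _ = |2 * I + 2 * J| := by rw [← h_identity, abs_mul, abs_of_nonneg h_nonneg]
      _ ≤ 2 * |I| + 2 * |J| := by simpa [abs_mul] using abs_add_le (2 * I) (2 * J)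
  calc U = 2 / δ * (δ * U - δ / 2 * U) := by field
    _ ≤ 2 / δ * (2 * |J| + (δ / 2)⁻¹ * W) := by
        gcongr
        linarith
    _ = 4 / δ * |J| + 4 / δ ^ 2 * W := by field

end Cutoff

theorem localized_hardy_origin_general {χ : ℝ → ℝ} {a b c δ : ℝ} (ha : 0 < a) (hab : a ≤ b)
    (hδ : 0 < δ) (hχ : ContDiffOn ℝ 1 χ (Icc 0 b)) (hχ_const : EqOn χ (fun _ => c) (Icc 0 a))
    (hχ_b : χ b = 0) :
    ∃ C : ℝ, 0 < C ∧ ∀ κ : ℝ, δ ≤ |2 * κ - 1| → ∀ u u' : ℝ → E,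
      (∀ r ∈ Icc 0 b, HasDerivWithinAt u (u' r) (Icc 0 b) r) → ContinuousOn u' (Icc 0 b) →
      ∫ r in (0 : ℝ)..b, ‖u r‖ ^ 2 * χ r ^ 2 ≤
        C * ((∫ r in a..b, ‖u r‖ ^ 2 * r ^ 2) +
          ∫ r in (0 : ℝ)..b, ‖u' r + (κ / r) • u r‖ ^ 2 * r ^ 2 * χ r ^ 2) := by
  have hb : 0 < b := ha.trans_le hab
  have hχ_diff : DifferentiableOn ℝ χ (Icc 0 b) := hχ.differentiableOn one_ne_zero
  have hχ'_cont := hχ.continuousOn_derivWithin (uniqueDiffOn_Icc hb) le_rfl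
  have hφ_cont : ContinuousOn (fun r => χ r * derivWithin χ (Icc 0 b) r) (Icc 0 b) :=
    hχ_diff.continuousOn.mul hχ'_cont
  have hφ_zero : EqOn (fun r => χ r * derivWithin χ (Icc 0 b) r) 0 (Icc 0 a) := fun r hr => by
    have h_sub : Icc 0 a ⊆ Icc 0 b := Icc_subset_Icc_right hab
    simp [derivWithin_eq_zero_of_eqOn_const h_sub (uniqueDiffOn_Icc ha r hr) hr
      (hχ_diff r (h_sub hr)) hχ_const]
  obtain ⟨M, hM⟩ := isCompact_Icc.exists_bound_of_continuousOn hφ_cont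
  have hM_nonneg : 0 ≤ M := (norm_nonneg _).trans (hM 0 (left_mem_Icc.2 hb.le))
  refine ⟨4 / δ * (M / a) + 4 / δ ^ 2, by positivity, fun κ hκ u u' hu hu' => ?_⟩
  have hu_cont : ContinuousOn u (Icc 0 b) := HasDerivWithinAt.continuousOn hu
  have h_hardy := integral_norm_sq_mul_cutoff_sq_le hb.le hδ hκ hu hu'
    (fun r hr => (hχ_diff r hr).hasDerivWithinAt) hχ'_cont hχ_b
  have h_cutoff := abs_integral_id_mul_mul_le_of_eqOn_zero (g := fun r => ‖u r‖ ^ 2) ha hab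
    (by fun_prop) (fun r _ => by positivity) hφ_cont hφ_zero
    (fun r hr => hM r ⟨ha.le.trans hr.1, hr.2⟩)
  rw [integral_norm_add_div_smul_sq_mul_sq]
  have hP : 0 ≤ ∫ r in a..b, ‖u r‖ ^ 2 * r ^ 2 := integral_nonneg hab fun r _ => by positivity
  have hW : 0 ≤ ∫ r in (0 : ℝ)..b, ‖r • u' r + κ • u r‖ ^ 2 * χ r ^ 2 :=
    integral_nonneg hb.le fun r _ => by positivity
  set P := ∫ r in a..b, ‖u r‖ ^ 2 * r ^ 2
  set W := ∫ r in (0 : ℝ)..b, ‖r • u' r + κ • u r‖ ^ 2 * χ r ^ 2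
  calc ∫ r in (0 : ℝ)..b, ‖u r‖ ^ 2 * χ r ^ 2
      ≤ 4 / δ * (M / a * P) + 4 / δ ^ 2 * W := h_hardy.trans (by gcongr)
    _ ≤ (4 / δ * (M / a) + 4 / δ ^ 2) * (P + W) := by
        rw [← mul_assoc, add_mul]
        gcongr <;> linarith

end InnerProductSpace

/-- Lemma C.1 part (1): the localized Hardy inequality near the origin, for either
`Au = u'` or `Au = u' + (2/r)u = D_r u`. -/
theorem localized_hardy_origin (χ : ℝ → ℝ)
    (hχ_smooth : ContDiffOn ℝ (⊤ : ℕ∞) χ (Set.Icc 0 1))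
    (hχ_nonneg : ∀ r ∈ Set.Icc (0:ℝ) 1, 0 ≤ χ r)
    (hχ_one : ∀ r ∈ Set.Icc (0:ℝ) (1/2), χ r = 1)
    (hχ_zero : ∀ r ∈ Set.Icc (3/4:ℝ) 1, χ r = 0)
    (hχ' : ∀ r ∈ Set.Icc (0:ℝ) 1, deriv χ r ≤ 0) :
    ∃ C : ℝ, 0 < C ∧ ∀ u u' : ℝ → ℝ,
      (∀ r ∈ Set.Icc (0:ℝ) 1, HasDerivWithinAt u (u' r) (Set.Icc 0 1) r) →
      ContinuousOn u' (Set.Icc 0 1) →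
      ((∫ r in (0:ℝ)..(3/4), u r ^ 2 * χ r ^ 2) ≤
        C * ((∫ r in (1/2:ℝ)..(3/4), u r ^ 2 * r ^ 2) +
          ∫ r in (0:ℝ)..(3/4), u' r ^ 2 * r ^ 2 * χ r ^ 2)) ∧
      ((∫ r in (0:ℝ)..(3/4), u r ^ 2 * χ r ^ 2) ≤
        C * ((∫ r in (1/2:ℝ)..(3/4), u r ^ 2 * r ^ 2) +
          ∫ r in (0:ℝ)..(3/4), (u' r + (2/r) * u r) ^ 2 * r ^ 2 * χ r ^ 2)) := by
  have h_sub : Icc (0 : ℝ) (3 / 4) ⊆ Icc 0 1 := Icc_subset_Icc_right (by norm_num)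
  obtain ⟨C, hC, hardy⟩ := localized_hardy_origin_general (E := ℝ) (a := 1 / 2) (b := 3 / 4)
    (by norm_num) (by norm_num) one_pos
    ((hχ_smooth.of_le (by exact_mod_cast le_top)).mono h_sub) hχ_one (hχ_zero _ (by norm_num))
  refine ⟨C, hC, fun u u' hu hu' => ?_⟩
  have hu_sub r (hr : r ∈ Icc (0 : ℝ) (3 / 4)) := (hu r (h_sub hr)).mono h_sub
  have hu'_sub := hu'.mono h_sub
  exact ⟨by simpa using hardy 0 (by norm_num) u u' hu_sub hu'_sub,
    by simpa using hardy 2 (by norm_num) u u' hu_sub hu'_sub⟩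
end
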